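/- arXiv:2504.05123 — 5 statements merged into one kernel-verified Lean document; each statement's English description precedes it below -/
import Mathlib

section
/- Let n ≥ 2. For every integer k ≥ 0, the number of connected compatible partitions of Ĉ_{2n} with exactly k+2 blocks equals, as a rational number, δ_k + Σ_{i=2}^{2n} Σ_{m=1}^{⌊i/2⌋} (2n/i) · C(i, 2m) · C(n+m−1, i−1) · C(2m, i−k), where i−k is computed in ℤ and C(a, b) = 0 whenever b < 0, and where δ_0 = 2, δ_1 = 1, and δ_k = 0 for k > 1. (By Stanley's correspondence between faces of the order polytope and CCPs of the poset with 0̂ and 1̂ adjoined, this number is the number f_k of k-dimensional faces of the order polytope O(C_{2n}).) -/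
/-- Cover relations of the crown poset `C_{2n}` on `{1,…,2n}`:
`2i−1 ≺ 2i` for `1 ≤ i ≤ n`, `2i+1 ≺ 2i` for `1 ≤ i ≤ n−1`, and `1 ≺ 2n`. -/
def crownCover (n x y : ℕ) : Prop :=
  Odd x ∧ Even y ∧ (y = x + 1 ∨ x = y + 1 ∨ (x = 1 ∧ y = 2 * n))

/-- The order relation of the crown poset `C_{2n}` (restricted to `{1,…,2n}`). -/
def crownLe (n x y : ℕ) : Prop := x = y ∨ crownCover n x y

/-- The ground set `{1,…,2n}` of the crown poset. -/
def crownGround (n : ℕ) : Finset ℕ := Finset.Icc 1 (2 * n)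

/-- `π` is a partition of the finite set `s`: blocks are nonempty subsets of `s`
and each element of `s` lies in exactly one block. -/
def IsPartitionOn (s : Finset ℕ) (π : Finset (Finset ℕ)) : Prop :=
  (∀ B ∈ π, B.Nonempty) ∧ (∀ B ∈ π, B ⊆ s) ∧ ∀ x ∈ s, ∃! B, B ∈ π ∧ x ∈ B

/-- A block is connected if it induces a connected subgraph of `G`. -/
def BlockConnected (G : SimpleGraph ℕ) (B : Finset ℕ) : Prop :=
  (G.induce (B : Set ℕ)).Connected

/-- A connected partition of `s` with respect to the graph `G`. -/
def IsConnectedPartition (s : Finset ℕ) (G : SimpleGraph ℕ) (π : Finset (Finset ℕ)) : Prop :=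
  IsPartitionOn s π ∧ ∀ B ∈ π, BlockConnected G B

/-- The comparability graph of the relation `le`. -/
def compGraph (le : ℕ → ℕ → Prop) : SimpleGraph ℕ := SimpleGraph.fromRel le

/-- The relation `B ≤_π B'` on blocks of `π`: both are blocks and there are
`x ∈ B`, `y ∈ B'` with `x ≤ y`. -/
def blockRel (le : ℕ → ℕ → Prop) (π : Finset (Finset ℕ)) (B B' : Finset ℕ) : Prop :=
  B ∈ π ∧ B' ∈ π ∧ ∃ x ∈ B, ∃ y ∈ B', le x y

/-- `π` is compatible: the transitive closure of `≤_π` is antisymmetric. -/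
def IsCompatible (le : ℕ → ℕ → Prop) (π : Finset (Finset ℕ)) : Prop :=
  ∀ B ∈ π, ∀ B' ∈ π, Relation.TransGen (blockRel le π) B B' →
    Relation.TransGen (blockRel le π) B' B → B = B'

/-- A connected and compatible partition (CCP) of the poset with ground set `s`
and order relation `le`. -/
def IsCCP (s : Finset ℕ) (le : ℕ → ℕ → Prop) (π : Finset (Finset ℕ)) : Prop :=
  IsConnectedPartition s (compGraph le) π ∧ IsCompatible le π

/-- The order relation of `Ĉ_{2n}`, the crown poset with a minimum `0̂ = 0` and a
maximum `1̂ = 2n+1` adjoined; ground set `{0,1,…,2n+1}`. -/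
def hatCrownLe (n x y : ℕ) : Prop :=
  x = y ∨ x = 0 ∨ y = 2 * n + 1 ∨
    (x ∈ crownGround n ∧ y ∈ crownGround n ∧ crownCover n x y)

/-- The ground set `{0,…,2n+1}` of `Ĉ_{2n}`. -/
def hatCrownGround (n : ℕ) : Finset ℕ := Finset.Icc 0 (2 * n + 1)

/-- The set of CCPs of `Ĉ_{2n}` with exactly `k` blocks. -/
def hatCCPs (n k : ℕ) : Set (Finset (Finset ℕ)) :=
  {π | IsCCP (hatCrownGround n) (hatCrownLe n) π ∧ π.card = k}

/-!
A connected compatible partition is the partition into fibres of a monotone labelling. If the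
labels are not constant on the crown, which is a `2n`-cycle, the partition is determined by the
set of edges across which they change, together with the arcs between these cuts that are merged
with `0̂` or `1̂`. Labels go up across odd cuts and down across even ones, so the local extrema
are exactly the arcs between cuts of opposite parity (the odd arcs), and only these can be merged.
Conversely, if odd arcs exist, cuts of both parities occur, so the steps up and down can be
weighted to sum to zero around the cycle, and any set of odd arcs can be merged. A cut set of size
`i` with `2m` odd arcs (their number is even) thus yields `C(2m, i - k)` partitions with `k + 2`
blocks; labellings constant on the crown give the term `δ_k`.

Rotating by one step flips all parities, hence preserves odd arcs. Double counting pairs of a cut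
set and one of its elements therefore shows that `i` times the number of cut sets is `2n` times the
number of those containing `2n`, and the latter are counted by a Pascal-type recursion on the
largest element.
-/

section FiberPartition

variable {α : Type*} {s : Finset ℕ} {le : ℕ → ℕ → Prop}

open Classical in
/-- The fibre through `x` of the labelling `g` restricted to `s`. -/
noncomputable def fiber (s : Finset ℕ) (g : ℕ → α) (x : ℕ) : Finset ℕ := {y ∈ s | g y = g x}

/-- The partition of `s` into the fibres of a labelling `g`: any partition has this form, and
compatibility amounts to the labels being monotone for some partial order. -/
noncomputable def fiberPartition (s : Finset ℕ) (g : ℕ → α) : Finset (Finset ℕ) :=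
  s.image (fiber s g)

@[simp]
theorem mem_fiber {g : ℕ → α} {x y : ℕ} : y ∈ fiber s g x ↔ y ∈ s ∧ g y = g x := by
  simp [fiber]

theorem exists_mem_fiberPartition_iff {g : ℕ → α} {x y : ℕ} (hx : x ∈ s) (hy : y ∈ s) :
    (∃ B ∈ fiberPartition s g, x ∈ B ∧ y ∈ B) ↔ g x = g y := by
  simp only [fiberPartition, Finset.mem_image, exists_exists_and_eq_and, mem_fiber]
  exact ⟨fun ⟨_, _, hxz, hyz⟩ => hxz.2.trans hyz.2.symm,
    fun h => ⟨x, hx, ⟨hx, rfl⟩, hy, h.symm⟩⟩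

theorem fiberPartition_eq_iff {β : Type*} {g : ℕ → α} {g' : ℕ → β} :
    fiberPartition s g = fiberPartition s g' ↔
      ∀ x ∈ s, ∀ y ∈ s, (g x = g y ↔ g' x = g' y) := by
  refine ⟨fun h x hx y hy => ?_, fun h => Finset.image_congr fun x hx => ?_⟩
  · rw [← exists_mem_fiberPartition_iff hx hy, h, exists_mem_fiberPartition_iff hx hy]
  · ext y
    simpa only [mem_fiber] using and_congr_right fun hy => h y hy x hx

theorem isPartitionOn_fiberPartition (s : Finset ℕ) (g : ℕ → α) :
    IsPartitionOn s (fiberPartition s g) := by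
  simp only [IsPartitionOn, fiberPartition, Finset.forall_mem_image]
  refine ⟨fun x hx => ⟨x, by simp [hx]⟩, fun x _ y hy => (mem_fiber.1 hy).1, fun x hx => ?_⟩
  refine ⟨fiber s g x, ⟨Finset.mem_image_of_mem _ hx, by simp [hx]⟩, ?_⟩
  rintro B ⟨hB, hxB⟩
  obtain ⟨z, -, rfl⟩ := Finset.mem_image.1 hB
  ext y
  simp only [mem_fiber, (mem_fiber.1 hxB).2]

theorem card_fiberPartition [DecidableEq α] (s : Finset ℕ) (g : ℕ → α) :
    (fiberPartition s g).card = (s.image g).card := by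
  have himage : fiberPartition s g = (s.image g).image fun a => {y ∈ s | g y = a} := by
    rw [Finset.image_image]
    exact Finset.image_congr fun x _ => by ext y; simp
  rw [himage, Finset.card_image_of_injOn]
  intro a ha b _ hab
  obtain ⟨x, hx, rfl⟩ := Finset.mem_image.1 ha
  exact (Finset.mem_filter.1 (Finset.ext_iff.1 hab x |>.1 (by simp [hx]))).2

theorem IsPartitionOn.exists_eq_fiberPartition {π : Finset (Finset ℕ)} (h : IsPartitionOn s π) :
    ∃ b : ℕ → Finset ℕ, (∀ x ∈ s, b x ∈ π ∧ x ∈ b x) ∧ π = fiberPartition s b := by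
  obtain ⟨hne, hsub, huniq⟩ := h
  have hblock : ∀ x, ∃ B, x ∈ s → B ∈ π ∧ x ∈ B := fun x =>
    if hx : x ∈ s then (huniq x hx).exists.imp fun _ hB _ => hB else ⟨∅, fun h => absurd h hx⟩
  choose b hb using hblock
  have heq : ∀ B ∈ π, ∀ x ∈ B, b x = B := fun B hB x hx =>
    (huniq x (hsub B hB hx)).unique (hb x (hsub B hB hx)) ⟨hB, hx⟩
  have hfiber : ∀ x ∈ s, fiber s b x = b x := fun x hx => by
    ext y
    rw [mem_fiber]
    exact ⟨fun ⟨hys, hy⟩ => hy ▸ (hb y hys).2,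
      fun hy => ⟨hsub _ (hb x hx).1 hy, heq _ (hb x hx).1 y hy⟩⟩
  refine ⟨b, hb, Finset.ext fun B => ⟨fun hB => ?_, fun hB => ?_⟩⟩
  · obtain ⟨x, hx⟩ := hne B hB
    rw [← heq B hB x hx, ← hfiber x (hsub B hB hx)]
    exact Finset.mem_image_of_mem _ (hsub B hB hx)
  · obtain ⟨x, hx, rfl⟩ := Finset.mem_image.1 hB
    exact hfiber x hx ▸ (hb x hx).1

variable [PartialOrder α] {g : ℕ → α}

theorem le_of_transGen_blockRel (hmono : ∀ x ∈ s, ∀ y ∈ s, le x y → g x ≤ g y)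
    {B B' : Finset ℕ} (h : Relation.TransGen (blockRel le (fiberPartition s g)) B B') :
    ∀ x ∈ B, ∀ y ∈ B', g x ≤ g y := by
  have hstep : ∀ {C D}, blockRel le (fiberPartition s g) C D → ∀ x ∈ C, ∀ y ∈ D, g x ≤ g y := by
    rintro C D ⟨hC, hD, u, hu, v, hv, huv⟩ x hx y hy
    obtain ⟨c, -, rfl⟩ := Finset.mem_image.1 hC
    obtain ⟨d, -, rfl⟩ := Finset.mem_image.1 hD
    rw [mem_fiber] at hu hv hx hy
    calc g x = g u := hx.2.trans hu.2.symm
      _ ≤ g v := hmono u hu.1 v hv.1 huv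
      _ = g y := hv.2.trans hy.2.symm
  induction h with
  | single h => exact hstep h
  | tail _ hCD ih =>
    intro x hx y hy
    obtain ⟨z, hz⟩ := (isPartitionOn_fiberPartition s g).1 _ hCD.1
    exact (ih x hx z hz).trans (hstep hCD z hz y hy)

theorem isCCP_fiberPartition (hmono : ∀ x ∈ s, ∀ y ∈ s, le x y → g x ≤ g y)
    (hconn : ∀ B ∈ fiberPartition s g, BlockConnected (compGraph le) B) :
    IsCCP s le (fiberPartition s g) := by
  refine ⟨⟨isPartitionOn_fiberPartition s g, hconn⟩, fun B hB B' hB' h h' => ?_⟩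
  obtain ⟨x, hx, rfl⟩ := Finset.mem_image.1 hB
  obtain ⟨y, hy, rfl⟩ := Finset.mem_image.1 hB'
  have hxy : g x = g y := le_antisymm
    (le_of_transGen_blockRel hmono h x (by simp [hx]) y (by simp [hy]))
    (le_of_transGen_blockRel hmono h' y (by simp [hy]) x (by simp [hx]))
  ext z
  simp only [mem_fiber, hxy]

theorem IsCCP.exists_monotone_label {π : Finset (Finset ℕ)} (h : IsCCP s le π) :
    ∃ (β : Type) (_ : PartialOrder β) (b : ℕ → β),
      (∀ x ∈ s, ∀ y ∈ s, le x y → b x ≤ b y) ∧ π = fiberPartition s b := by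
  obtain ⟨⟨hpart, -⟩, hcomp⟩ := h
  obtain ⟨b, hb, hπ⟩ := hpart.exists_eq_fiberPartition
  have hmem : ∀ {B B'}, Relation.TransGen (blockRel le π) B B' → B ∈ π ∧ B' ∈ π := fun h => by
    induction h with
    | single h => exact ⟨h.1, h.2.1⟩
    | tail _ h ih => exact ⟨ih.1, h.2.1⟩
  let blockOrder : PartialOrder (Finset ℕ) :=
    { le := Relation.ReflTransGen (blockRel le π)
      lt := fun B B' => Relation.ReflTransGen (blockRel le π) B B' ∧
        ¬ Relation.ReflTransGen (blockRel le π) B' B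
      lt_iff_le_not_ge := fun _ _ => Iff.rfl
      le_refl := fun _ => .refl
      le_trans := fun _ _ _ => .trans
      le_antisymm := fun B B' h h' => by
        rcases Relation.reflTransGen_iff_eq_or_transGen.1 h with h | h
        · exact h.symm
        rcases Relation.reflTransGen_iff_eq_or_transGen.1 h' with h' | h'
        · exact h'
        exact hcomp B (hmem h).1 B' (hmem h).2 h h' }
  exact ⟨Finset ℕ, blockOrder, b, fun x hx y hy hxy =>
    .single ⟨(hb x hx).1, (hb y hy).1, x, (hb x hx).2, y, (hb y hy).2, hxy⟩, hπ⟩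

end FiberPartition

section BlockConnected

variable {G : SimpleGraph ℕ} {B : Finset ℕ}

theorem blockConnected_of_reflTransGen {a : ℕ} (ha : a ∈ B)
    (h : ∀ b ∈ B, Relation.ReflTransGen (fun x y => y ∈ B ∧ G.Adj x y) a b) :
    BlockConnected G B := by
  rw [BlockConnected, SimpleGraph.connected_iff_exists_forall_reachable]
  refine ⟨⟨a, ha⟩, fun ⟨b, hb⟩ => ?_⟩
  have key : ∀ {c}, Relation.ReflTransGen (fun x y => y ∈ B ∧ G.Adj x y) a c →
      ∃ hc : c ∈ B, (G.induce (B : Set ℕ)).Reachable ⟨a, ha⟩ ⟨c, hc⟩ := fun h => by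
    induction h with
    | refl => exact ⟨ha, .refl _⟩
    | tail _ hstep ih => exact ⟨hstep.1, ih.2.trans (SimpleGraph.Adj.reachable hstep.2)⟩
  exact (key (h b hb)).2

theorem BlockConnected.eq_of_forall_adj {α : Type*} {f : ℕ → α} (hB : BlockConnected G B)
    (h : ∀ a ∈ B, ∀ b ∈ B, G.Adj a b → f a = f b) {a b : ℕ} (ha : a ∈ B) (hb : b ∈ B) :
    f a = f b := by
  obtain ⟨w⟩ := hB.preconnected ⟨a, ha⟩ ⟨b, hb⟩
  suffices ∀ {u v : (B : Set ℕ)}, (G.induce (B : Set ℕ)).Walk u v → f u = f v from this w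
  intro u v w
  induction w with
  | nil => rfl
  | cons huv _ ih => exact (h _ (Subtype.property _) _ (Subtype.property _) huv).trans ih

end BlockConnected

section Crown

variable {n v x y : ℕ}

/-- The cyclic successor on the ground set `{1,…,2n}` of the crown. The `2n` edges of the Hasse
diagram of `C_{2n}` join `e` and `cyclicNext n e`, and are indexed by `e`. -/
def cyclicNext (n v : ℕ) : ℕ := if v = 2 * n then 1 else v + 1

theorem mem_crownGround : v ∈ crownGround n ↔ 1 ≤ v ∧ v ≤ 2 * n := Finset.mem_Icc

theorem hatCrownGround_eq_insert (n : ℕ) :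
    hatCrownGround n = insert 0 (insert (2 * n + 1) (crownGround n)) := by
  ext v
  simp only [hatCrownGround, Finset.mem_Icc, Finset.mem_insert, mem_crownGround]
  lia

theorem cyclicNext_mem (hv : v ∈ crownGround n) : cyclicNext n v ∈ crownGround n := by
  rw [mem_crownGround] at hv ⊢
  grind [cyclicNext]

theorem injOn_cyclicNext : Set.InjOn (cyclicNext n) (crownGround n) := fun v hv w hw h => by
  rw [Finset.mem_coe, mem_crownGround] at hv hw
  grind [cyclicNext]

theorem odd_cyclicNext : Odd (cyclicNext n v) ↔ Even v := by
  grind [cyclicNext]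

theorem even_cyclicNext : Even (cyclicNext n v) ↔ Odd v := by
  grind [cyclicNext]

theorem cyclicNext_induction {P : ℕ → Prop} (hv : v ∈ crownGround n) (hPv : P v)
    (hnext : ∀ w ∈ crownGround n, P w → P (cyclicNext n w)) : ∀ w ∈ crownGround n, P w := by
  have climb : ∀ a, 1 ≤ a → P a → ∀ b, a ≤ b → b ≤ 2 * n → P b := fun a ha hPa b hab => by
    induction b, hab using Nat.le_induction with
    | base => exact fun _ => hPa
    | succ b hab ih =>
      intro hb
      have hPb := hnext b (mem_crownGround.2 ⟨by lia, by lia⟩) (ih (by lia))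
      rwa [cyclicNext, if_neg (by lia)] at hPb
  rw [mem_crownGround] at hv
  have hPtop : P (2 * n) := climb v hv.1 hPv _ hv.2 le_rfl
  have hPone : P 1 := by
    simpa [cyclicNext] using hnext (2 * n) (mem_crownGround.2 ⟨by lia, le_rfl⟩) hPtop
  intro w hw
  rw [mem_crownGround] at hw
  exact climb 1 le_rfl hPone w hw.1 hw.2

theorem eq_of_cyclicNext_le {α : Type*} [PartialOrder α] {f : ℕ → α}
    (hf : ∀ v ∈ crownGround n, f (cyclicNext n v) ≤ f v) (hx : x ∈ crownGround n)
    (hy : y ∈ crownGround n) : f x = f y := by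
  have hle : ∀ {u v}, u ∈ crownGround n → v ∈ crownGround n → f v ≤ f u := fun hu hv =>
    cyclicNext_induction (P := (f · ≤ f _)) hu le_rfl (fun w hw h => (hf w hw).trans h) _ hv
  exact le_antisymm (hle hy hx) (hle hx hy)

theorem hatCrownLe_iff : hatCrownLe n x y ↔ x = y ∨ x = 0 ∨ y = 2 * n + 1 ∨
    ∃ e ∈ crownGround n, (Odd e ∧ x = e ∧ y = cyclicNext n e) ∨
      (Even e ∧ x = cyclicNext n e ∧ y = e) := by
  simp only [hatCrownLe, mem_crownGround, crownCover]
  refine or_congr_right (or_congr_right (or_congr_right ⟨?_, ?_⟩))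
  · rintro ⟨hx, hy, hodd, heven, hcover⟩
    by_cases hxy : y = x + 1
    · exact ⟨x, hx, .inl ⟨hodd, rfl, by grind [cyclicNext]⟩⟩
    · exact ⟨y, hy, .inr ⟨heven, by grind [cyclicNext], rfl⟩⟩
  · rintro ⟨e, he, ⟨hodd, rfl, rfl⟩ | ⟨heven, rfl, rfl⟩⟩ <;>
      grind [cyclicNext]

theorem compGraph_adj_cyclicNext (hv : v ∈ crownGround n) :
    (compGraph (hatCrownLe n)).Adj v (cyclicNext n v) := by
  rw [compGraph, SimpleGraph.fromRel_adj]
  refine ⟨by grind [cyclicNext, mem_crownGround], ?_⟩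
  rcases Nat.even_or_odd v with h | h
  · exact .inr (hatCrownLe_iff.2 <| .inr <| .inr <| .inr ⟨v, hv, .inr ⟨h, rfl, rfl⟩⟩)
  · exact .inl (hatCrownLe_iff.2 <| .inr <| .inr <| .inr ⟨v, hv, .inl ⟨h, rfl, rfl⟩⟩)

end Crown

section Cuts

variable {n v w : ℕ} {S : Finset ℕ}

/-- The largest element of `S` below `v`, with the junk value `0` if there is none; for a set of
positive numbers this amounts to a virtual element `0`. -/
def lastBelow (S : Finset ℕ) (v : ℕ) : ℕ := (S.filter (· < v)).sup id

/-- The last cut strictly before `v` in cyclic order, for a set `S` of cuts of the crown cycle.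
A cut at `e` separates `e` from `cyclicNext n e`, so `prevCut S` is constant on the arcs into
which the cuts divide the cycle, and sends each arc to the cut at which it starts. -/
def prevCut (S : Finset ℕ) (v : ℕ) : ℕ := if ∃ s ∈ S, s < v then lastBelow S v else S.sup id

theorem sup_id_eq_iff (hS : S.Nonempty) : S.sup id = w ↔ w ∈ S ∧ ∀ t ∈ S, t ≤ w := by
  refine ⟨?_, fun h => le_antisymm (Finset.sup_le h.2) (Finset.le_sup (f := id) h.1)⟩
  rintro rfl
  obtain ⟨i, hi, heq⟩ := Finset.exists_mem_eq_sup S hS id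
  exact ⟨heq ▸ hi, fun t ht => Finset.le_sup (f := id) ht⟩

theorem lastBelow_eq_iff (h : ∃ s ∈ S, s < v) :
    lastBelow S v = w ↔ w ∈ S ∧ w < v ∧ ∀ t ∈ S, t < v → t ≤ w := by
  obtain ⟨s, hs, hsv⟩ := h
  rw [lastBelow, sup_id_eq_iff ⟨s, Finset.mem_filter.2 ⟨hs, hsv⟩⟩]
  simp only [Finset.mem_filter, and_assoc, and_imp]

theorem prevCut_eq_iff (hS : S.Nonempty) :
    prevCut S v = w ↔ w ∈ S ∧ ((w < v ∧ ∀ t ∈ S, t < v → t ≤ w) ∨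
      ((∀ t ∈ S, v ≤ t) ∧ ∀ t ∈ S, t ≤ w)) := by
  by_cases h : ∃ s ∈ S, s < v
  · rw [prevCut, if_pos h, lastBelow_eq_iff h]
    grind
  · rw [prevCut, if_neg h, sup_id_eq_iff hS]
    grind

theorem prevCut_spec (hS : S.Nonempty) (v : ℕ) :
    prevCut S v ∈ S ∧ ((prevCut S v < v ∧ ∀ t ∈ S, t < v → t ≤ prevCut S v) ∨
      ((∀ t ∈ S, v ≤ t) ∧ ∀ t ∈ S, t ≤ prevCut S v)) :=
  (prevCut_eq_iff hS).1 rfl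

theorem prevCut_mem (hS : S.Nonempty) (v : ℕ) : prevCut S v ∈ S := (prevCut_spec hS v).1

theorem injOn_prevCut (S : Finset ℕ) : Set.InjOn (prevCut S) S := fun s hs t ht h => by
  have hspec := prevCut_spec ⟨s, hs⟩
  grind

theorem image_prevCut (S : Finset ℕ) : S.image (prevCut S) = S :=
  Finset.eq_of_subset_of_card_le
    (Finset.image_subset_iff.2 fun s hs => prevCut_mem ⟨s, hs⟩ s)
    (Finset.card_image_of_injOn (injOn_prevCut S)).ge

theorem prevCut_cyclicNext_of_mem (hS : S ⊆ crownGround n) (hv : v ∈ S) :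
    prevCut S (cyclicNext n v) = v := by
  simp only [Finset.subset_iff, mem_crownGround] at hS
  rw [prevCut_eq_iff ⟨v, hv⟩]
  grind [cyclicNext]

theorem prevCut_cyclicNext_of_notMem (hS : S ⊆ crownGround n) (hne : S.Nonempty)
    (hv : v ∉ S) : prevCut S (cyclicNext n v) = prevCut S v := by
  simp only [Finset.subset_iff, mem_crownGround] at hS
  rw [prevCut_eq_iff hne]
  have hspec := prevCut_spec hne v
  grind [cyclicNext]

theorem arc_induction {P : ℕ → ℕ → Prop} (hS : S ⊆ crownGround n) (hne : S.Nonempty)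
    (hcut : ∀ s ∈ S, P s (cyclicNext n s))
    (hstep : ∀ v ∈ crownGround n, v ∉ S → P (prevCut S v) v → P (prevCut S v) (cyclicNext n v)) :
    ∀ v ∈ crownGround n, P (prevCut S v) v := by
  have hstart : ∀ s ∈ S, P (prevCut S (cyclicNext n s)) (cyclicNext n s) := fun s hs => by
    rw [prevCut_cyclicNext_of_mem hS hs]
    exact hcut s hs
  obtain ⟨s, hs⟩ := hne
  refine cyclicNext_induction (cyclicNext_mem (hS hs)) (hstart s hs) fun v hv hPv => ?_
  by_cases hvS : v ∈ S
  · exact hstart v hvS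
  · rw [prevCut_cyclicNext_of_notMem hS ⟨s, hs⟩ hvS]
    exact hstep v hv hvS hPv

theorem eq_cyclicNext_prevCut {α : Type*} {f : ℕ → α} (hS : S ⊆ crownGround n) (hne : S.Nonempty)
    (hf : ∀ v ∈ crownGround n, v ∉ S → f (cyclicNext n v) = f v) :
    ∀ v ∈ crownGround n, f v = f (cyclicNext n (prevCut S v)) :=
  arc_induction (P := fun s v => f v = f (cyclicNext n s)) hS hne (fun _ _ => rfl)
    fun v hv hvS h => (hf v hv hvS).trans h

end Cuts

section OddArcs

variable {n t : ℕ} {S : Finset ℕ}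

/-- The cuts at which an odd arc ends: those at odd distance from the preceding cut. -/
def oddRight (S : Finset ℕ) : Finset ℕ := S.filter fun t => Odd (prevCut S t + t)

/-- The cuts at which an odd arc starts: those at odd distance from the following cut. -/
def oddLeft (S : Finset ℕ) : Finset ℕ := (oddRight S).image (prevCut S)

theorem mem_oddRight : t ∈ oddRight S ↔ t ∈ S ∧ Odd (prevCut S t + t) := Finset.mem_filter

theorem card_oddLeft (S : Finset ℕ) : (oddLeft S).card = (oddRight S).card :=
  Finset.card_image_of_injOn ((injOn_prevCut S).mono (Finset.filter_subset _ _))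

theorem oddLeft_subset (S : Finset ℕ) : oddLeft S ⊆ S :=
  Finset.image_subset_iff.2 fun t ht => prevCut_mem ⟨t, (mem_oddRight.1 ht).1⟩ t

theorem prevCut_mem_oddLeft_iff (ht : t ∈ S) :
    prevCut S t ∈ oddLeft S ↔ Odd (prevCut S t + t) := by
  refine ⟨fun h => ?_, fun h => Finset.mem_image_of_mem _ (mem_oddRight.2 ⟨ht, h⟩)⟩
  obtain ⟨u, hu, hut⟩ := Finset.mem_image.1 h
  rw [mem_oddRight] at hu
  exact injOn_prevCut S hu.1 ht hut ▸ hu.2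

theorem even_card_oddRight (S : Finset ℕ) : Even (oddRight S).card := by
  rw [oddRight, ← Finset.even_sum_iff_even_card_odd, Finset.sum_add_distrib]
  have hsum : ∑ t ∈ S, prevCut S t = ∑ t ∈ S, t := by
    conv_rhs => rw [← image_prevCut S, Finset.sum_image (injOn_prevCut S)]
  rw [hsum]
  exact Even.add_self _

theorem exists_odd_exists_even (h : (oddLeft S).Nonempty) :
    (∃ t ∈ S, Odd t) ∧ ∃ t ∈ S, Even t := by
  obtain ⟨t, ht⟩ := Finset.image_nonempty.1 h
  obtain ⟨htS, hodd⟩ := mem_oddRight.1 ht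
  have hprev := prevCut_mem ⟨t, htS⟩ t
  rcases Nat.even_or_odd t with heven | hodd'
  · exact ⟨⟨_, hprev, by grind⟩, ⟨t, htS, heven⟩⟩
  · exact ⟨⟨t, htS, hodd'⟩, ⟨_, hprev, by grind⟩⟩

theorem even_iff_even_of_oddLeft_eq_empty (hS : S ⊆ crownGround n) (h : oddLeft S = ∅) {s : ℕ}
    (hs : s ∈ S) (ht : t ∈ S) : Even s ↔ Even t := by
  have hconst : ∀ v ∈ crownGround n,
      Even (prevCut S (cyclicNext n v)) ↔ Even (prevCut S v) := fun v _ => by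
    by_cases hvS : v ∈ S
    · have hgap := (prevCut_mem_oddLeft_iff hvS).not.1 (h ▸ Finset.notMem_empty _)
      rw [prevCut_cyclicNext_of_mem hS hvS]
      grind
    · rw [prevCut_cyclicNext_of_notMem hS ⟨s, hs⟩ hvS]
  have heq := eq_of_cyclicNext_le (f := fun v => Even (prevCut S v))
    (fun v hv => (propext (hconst v hv)).le) (cyclicNext_mem (hS hs)) (cyclicNext_mem (hS ht))
  rwa [prevCut_cyclicNext_of_mem hS hs, prevCut_cyclicNext_of_mem hS ht, eq_iff_iff] at heq

end OddArcs

section HatLabel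

variable {n v : ℕ} {B : Finset ℕ} {α : Type*}

theorem blockConnected_of_zero_mem (h : 0 ∈ B) : BlockConnected (compGraph (hatCrownLe n)) B :=
  blockConnected_of_reflTransGen h fun b hb => by
    rcases eq_or_ne 0 b with rfl | hne
    · exact .refl
    · exact .single ⟨hb, hne, .inl (.inr (.inl rfl))⟩

theorem blockConnected_of_top_mem (h : 2 * n + 1 ∈ B) :
    BlockConnected (compGraph (hatCrownLe n)) B :=
  blockConnected_of_reflTransGen h fun b hb => by
    rcases eq_or_ne (2 * n + 1) b with rfl | hne
    · exact .refl
    · exact .single ⟨hb, hne, .inr (.inr (.inr (.inl rfl)))⟩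

theorem blockConnected_crownGround (hn : 0 < n) :
    BlockConnected (compGraph (hatCrownLe n)) (crownGround n) := by
  have hone : 1 ∈ crownGround n := mem_crownGround.2 ⟨le_rfl, by lia⟩
  exact blockConnected_of_reflTransGen hone <|
    cyclicNext_induction hone .refl fun w hw h =>
      h.tail ⟨cyclicNext_mem hw, compGraph_adj_cyclicNext hw⟩

theorem blockConnected_arc {S : Finset ℕ} (hS : S ⊆ crownGround n) (hne : S.Nonempty) (v : ℕ) :
    BlockConnected (compGraph (hatCrownLe n)) (fiber (crownGround n) (prevCut S) v) := by
  have hv := prevCut_mem hne v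
  refine blockConnected_of_reflTransGen (a := cyclicNext n (prevCut S v))
    (by simp [cyclicNext_mem (hS hv), prevCut_cyclicNext_of_mem hS hv]) fun b hb => ?_
  obtain ⟨hb, hbv⟩ := mem_fiber.1 hb
  refine arc_induction (P := fun s w => s = prevCut S v → Relation.ReflTransGen _
    (cyclicNext n (prevCut S v)) w) hS hne ?_ (fun w hw hwS h hwv => ?_) b hb hbv
  · rintro s - rfl
    exact .refl
  · refine (h hwv).tail ⟨mem_fiber.2 ⟨cyclicNext_mem hw, ?_⟩, compGraph_adj_cyclicNext hw⟩
    rwa [prevCut_cyclicNext_of_notMem hS hne hwS]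

/-- The extension of a labelling of the crown to `Ĉ_{2n}`, with `0̂` labelled `⊥` and `1̂`
labelled `⊤`. -/
def hatLabel [Bot α] [Top α] (n : ℕ) (f : ℕ → α) (v : ℕ) : α :=
  if v = 0 then ⊥ else if v = 2 * n + 1 then ⊤ else f v

section Simp

variable [Bot α] [Top α] {f : ℕ → α}

@[simp]
theorem hatLabel_zero : hatLabel n f 0 = ⊥ := if_pos rfl

@[simp]
theorem hatLabel_top : hatLabel n f (2 * n + 1) = ⊤ := by simp [hatLabel]

theorem hatLabel_of_mem (hv : v ∈ crownGround n) : hatLabel n f v = f v := by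
  rw [mem_crownGround] at hv
  rw [hatLabel, if_neg (by lia), if_neg (by lia)]

theorem card_fiberPartition_hatLabel [DecidableEq α] (n : ℕ) (f : ℕ → α) :
    (fiberPartition (hatCrownGround n) (hatLabel n f)).card =
      (insert ⊥ (insert ⊤ ((crownGround n).image f))).card := by
  rw [card_fiberPartition, hatCrownGround_eq_insert, Finset.image_insert, Finset.image_insert,
    hatLabel_zero, hatLabel_top, Finset.image_congr fun v hv => hatLabel_of_mem hv]

end Simp

variable [PartialOrder α] [BoundedOrder α] {f : ℕ → α}

theorem isCCP_hatLabel (hodd : ∀ e ∈ crownGround n, Odd e → f e ≤ f (cyclicNext n e))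
    (heven : ∀ e ∈ crownGround n, Even e → f (cyclicNext n e) ≤ f e)
    (hconn : ∀ v ∈ crownGround n, f v ≠ ⊥ → f v ≠ ⊤ →
      BlockConnected (compGraph (hatCrownLe n)) (fiber (crownGround n) f v)) :
    IsCCP (hatCrownGround n) (hatCrownLe n) (fiberPartition (hatCrownGround n) (hatLabel n f)) := by
  refine isCCP_fiberPartition (fun x _ y _ hxy => ?_) fun B hB => ?_
  · rcases hatCrownLe_iff.1 hxy with rfl | rfl | rfl | ⟨e, he, ⟨h, rfl, rfl⟩ | ⟨h, rfl, rfl⟩⟩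
    · exact le_rfl
    · exact hatLabel_zero.trans_le bot_le
    · exact le_top.trans_eq hatLabel_top.symm
    · rw [hatLabel_of_mem he, hatLabel_of_mem (cyclicNext_mem he)]
      exact hodd _ he h
    · rw [hatLabel_of_mem he, hatLabel_of_mem (cyclicNext_mem he)]
      exact heven _ he h
  · obtain ⟨v, hv, rfl⟩ := Finset.mem_image.1 hB
    by_cases hbot : hatLabel n f v = ⊥
    · exact blockConnected_of_zero_mem (mem_fiber.2 ⟨by simp [hatCrownGround], by simp [hbot]⟩)
    by_cases htop : hatLabel n f v = ⊤
    · exact blockConnected_of_top_mem (mem_fiber.2 ⟨by simp [hatCrownGround], by simp [htop]⟩)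
    have hcrown : ∀ w ∈ hatCrownGround n, hatLabel n f w = hatLabel n f v → w ∈ crownGround n := by
      rw [hatCrownGround_eq_insert]
      grind [hatLabel_zero, hatLabel_top]
    have hvC := hcrown v hv rfl
    rw [hatLabel_of_mem hvC] at hbot htop
    convert hconn v hvC hbot htop using 1
    ext w
    rw [mem_fiber, mem_fiber, ← hatLabel_of_mem (f := f) hvC]
    refine ⟨fun h => ?_, fun h => ?_⟩
    · have hw := hcrown w h.1 h.2
      exact ⟨hw, (hatLabel_of_mem hw).symm.trans h.2⟩
    · exact ⟨hatCrownGround_eq_insert n ▸ by simp [h.1], (hatLabel_of_mem h.1).trans h.2⟩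

end HatLabel

section ArcLabel

variable {n e v w : ℕ} {S T : Finset ℕ}

/-- The change of height at a cut. Labels increase across odd cuts and decrease across even cuts,
and the weights of all cuts sum to `0`, as they have to around a cycle. -/
def cutWeight (S : Finset ℕ) (e : ℕ) : ℤ :=
  if Even e then -((S.filter Odd).card : ℤ) else (S.filter Even).card

/-- The height of the arc that starts at the cut `s`. -/
def heightAfter (S : Finset ℕ) (s : ℕ) : ℤ := ∑ u ∈ S with u ≤ s, cutWeight S u

theorem sum_cutWeight (S : Finset ℕ) : ∑ e ∈ S, cutWeight S e = 0 := by
  simp only [cutWeight, Finset.sum_ite, Finset.sum_const, nsmul_eq_mul, Nat.not_even_iff_odd]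
  ring

theorem heightAfter_eq (he : e ∈ S) :
    heightAfter S e = heightAfter S (prevCut S e) + cutWeight S e := by
  obtain ⟨_, ⟨hlt, hmax⟩ | ⟨hmin, hmax⟩⟩ := prevCut_spec ⟨e, he⟩ e
  · have hinsert : S.filter (· ≤ e) = insert e (S.filter (· ≤ prevCut S e)) := by
      ext t
      grind
    rw [heightAfter, hinsert, Finset.sum_insert (by simp [hlt]), add_comm, heightAfter]
  · have hfirst : S.filter (· ≤ e) = {e} := by
      ext t
      grind
    rw [heightAfter, hfirst, Finset.sum_singleton, heightAfter, Finset.filter_true_of_mem hmax,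
      sum_cutWeight, zero_add]

theorem heightAfter_prevCut_lt (he : e ∈ S) (hodd : Odd e) (hS : ∃ t ∈ S, Even t) :
    heightAfter S (prevCut S e) < heightAfter S e := by
  rw [heightAfter_eq he, cutWeight, if_neg (Nat.not_even_iff_odd.2 hodd), lt_add_iff_pos_right]
  exact_mod_cast Finset.card_pos.2 (Finset.filter_nonempty_iff.2 hS)

theorem heightAfter_lt_prevCut (he : e ∈ S) (heven : Even e) (hS : ∃ t ∈ S, Odd t) :
    heightAfter S e < heightAfter S (prevCut S e) := by
  rw [heightAfter_eq he, cutWeight, if_pos heven, add_lt_iff_neg_left, neg_lt_zero]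
  exact_mod_cast Finset.card_pos.2 (Finset.filter_nonempty_iff.2 hS)

/-- The data describing a connected compatible partition of `Ĉ_{2n}` whose restriction to the
crown is not constant: the set `S` of cuts, and the set `T` of cuts at which those arcs start that
are merged with `0̂` or `1̂`. Such an arc is a local extremum of the labels, so its length is
odd. -/
structure IsCutData (n : ℕ) (S T : Finset ℕ) : Prop where
  subset_crownGround : S ⊆ crownGround n
  subset_oddLeft : T ⊆ oddLeft S
  oddLeft_nonempty : (oddLeft S).Nonempty

/-- The label of the arc that starts at the cut `s`, before merging: arcs are ordered by height,
and distinct arcs of equal height are told apart by the second component. -/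
def arcRank (S : Finset ℕ) (s : ℕ) : WithBot (WithTop (ℤ ×ₗ ℕ)) :=
  ((toLex (heightAfter S s, s) : ℤ ×ₗ ℕ) : WithTop (ℤ ×ₗ ℕ))

/-- The label of the arc that starts at the cut `s`. An arc in `T` takes the label of `0̂` if it is
a local minimum, i.e. if `s` is even, and that of `1̂` otherwise. -/
def cutLabel (S T : Finset ℕ) (s : ℕ) : WithBot (WithTop (ℤ ×ₗ ℕ)) :=
  if s ∈ T then (if Even s then ⊥ else ⊤) else arcRank S s

/-- The labelling of the crown that encodes the cut data `S`, `T`. -/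
def arcLabel (S T : Finset ℕ) (v : ℕ) : WithBot (WithTop (ℤ ×ₗ ℕ)) := cutLabel S T (prevCut S v)

theorem bot_lt_arcRank (S : Finset ℕ) (s : ℕ) : ⊥ < arcRank S s := WithBot.bot_lt_coe _

theorem arcRank_lt_top (S : Finset ℕ) (s : ℕ) : arcRank S s < ⊤ :=
  WithBot.coe_lt_coe.2 (WithTop.coe_lt_top _)

theorem arcRank_lt_arcRank (h : heightAfter S v < heightAfter S w) : arcRank S v < arcRank S w :=
  WithBot.coe_lt_coe.2 <| WithTop.coe_lt_coe.2 <| Prod.Lex.toLex_lt_toLex.2 <| .inl h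

theorem arcRank_injective (S : Finset ℕ) : Function.Injective (arcRank S) := fun v w h => by
  simp only [arcRank, WithBot.coe_inj, WithTop.coe_inj, toLex_inj, Prod.mk.injEq] at h
  exact h.2

theorem cutLabel_eq_bot_iff : cutLabel S T v = ⊥ ↔ v ∈ T ∧ Even v := by
  grind [cutLabel, bot_lt_arcRank, bot_ne_top]

theorem cutLabel_eq_top_iff : cutLabel S T v = ⊤ ↔ v ∈ T ∧ Odd v := by
  grind [cutLabel, arcRank_lt_top, bot_ne_top]

theorem cutLabel_eq_iff (hv : v ∉ T) : cutLabel S T w = cutLabel S T v ↔ w = v := by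
  grind [cutLabel, bot_lt_arcRank, arcRank_lt_top, arcRank_injective]

namespace IsCutData

theorem nonempty (h : IsCutData n S T) : S.Nonempty := h.oddLeft_nonempty.mono (oddLeft_subset S)

theorem odd_gap (h : IsCutData n S T) (he : e ∈ S) (hT : prevCut S e ∈ T) :
    Odd (prevCut S e + e) :=
  (prevCut_mem_oddLeft_iff he).1 (h.subset_oddLeft hT)

theorem cutLabel_prevCut_lt (h : IsCutData n S T) (he : e ∈ S) (hodd : Odd e) :
    cutLabel S T (prevCut S e) < cutLabel S T e := by
  have hheight := heightAfter_prevCut_lt he hodd (exists_odd_exists_even h.oddLeft_nonempty).2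
  have hrank := arcRank_lt_arcRank hheight
  have heven : prevCut S e ∈ T → Even (prevCut S e) := fun hT => by grind [h.odd_gap he hT]
  have hbot := bot_lt_arcRank S
  have htop := arcRank_lt_top S
  grind [cutLabel, bot_lt_top]

theorem cutLabel_lt_prevCut (h : IsCutData n S T) (he : e ∈ S) (heven : Even e) :
    cutLabel S T e < cutLabel S T (prevCut S e) := by
  have hheight := heightAfter_lt_prevCut he heven (exists_odd_exists_even h.oddLeft_nonempty).1
  have hrank := arcRank_lt_arcRank hheight
  have hodd : prevCut S e ∈ T → Odd (prevCut S e) := fun hT => by grind [h.odd_gap he hT]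
  have hbot := bot_lt_arcRank S
  have htop := arcRank_lt_top S
  grind [cutLabel, bot_lt_top]

theorem arcLabel_cyclicNext (h : IsCutData n S T) (he : e ∈ S) :
    arcLabel S T (cyclicNext n e) = cutLabel S T e := by
  rw [arcLabel, prevCut_cyclicNext_of_mem h.subset_crownGround he]

theorem arcLabel_cyclicNext_eq_iff (h : IsCutData n S T) :
    arcLabel S T (cyclicNext n v) = arcLabel S T v ↔ v ∉ S := by
  refine ⟨fun heq hv => ?_, fun hv => ?_⟩
  · rw [h.arcLabel_cyclicNext hv] at heq
    rcases Nat.even_or_odd v with heven | hodd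
    · exact (h.cutLabel_lt_prevCut hv heven).ne heq
    · exact (h.cutLabel_prevCut_lt hv hodd).ne' heq
  · rw [arcLabel, prevCut_cyclicNext_of_notMem h.subset_crownGround h.nonempty hv, arcLabel]

theorem isCCP_arcLabel (h : IsCutData n S T) :
    IsCCP (hatCrownGround n) (hatCrownLe n)
      (fiberPartition (hatCrownGround n) (hatLabel n (arcLabel S T))) := by
  refine isCCP_hatLabel (fun e _ hodd => ?_) (fun e _ heven => ?_) fun v _ hbot htop => ?_
  · by_cases heS : e ∈ S
    · exact h.arcLabel_cyclicNext heS ▸ (h.cutLabel_prevCut_lt heS hodd).le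
    · exact (h.arcLabel_cyclicNext_eq_iff.2 heS).ge
  · by_cases heS : e ∈ S
    · exact h.arcLabel_cyclicNext heS ▸ (h.cutLabel_lt_prevCut heS heven).le
    · exact (h.arcLabel_cyclicNext_eq_iff.2 heS).le
  · have hvT : prevCut S v ∉ T := by
      grind [arcLabel, cutLabel_eq_bot_iff, cutLabel_eq_top_iff]
    convert blockConnected_arc h.subset_crownGround h.nonempty v using 1
    ext w
    simp only [mem_fiber, arcLabel, cutLabel_eq_iff hvT]

theorem image_arcLabel (h : IsCutData n S T) :
    (crownGround n).image (arcLabel S T) = S.image (cutLabel S T) := by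
  refine Finset.Subset.antisymm (Finset.image_subset_iff.2 fun v _ => ?_)
    (Finset.image_subset_iff.2 fun s hs => ?_)
  · exact Finset.mem_image_of_mem _ (prevCut_mem h.nonempty v)
  · exact h.arcLabel_cyclicNext hs ▸
      Finset.mem_image_of_mem _ (cyclicNext_mem (h.subset_crownGround hs))

theorem card_fiberPartition_arcLabel (h : IsCutData n S T) :
    (fiberPartition (hatCrownGround n) (hatLabel n (arcLabel S T))).card + T.card =
      S.card + 2 := by
  have hTS : T ⊆ S := h.subset_oddLeft.trans (oddLeft_subset S)
  have himage : insert ⊥ (insert ⊤ (S.image (cutLabel S T))) =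
      insert ⊥ (insert ⊤ ((S \ T).image (arcRank S))) := by
    ext a
    simp only [Finset.mem_insert, Finset.mem_image, Finset.mem_sdiff]
    grind [cutLabel]
  rw [card_fiberPartition_hatLabel, h.image_arcLabel, himage, Finset.card_insert_of_notMem,
    Finset.card_insert_of_notMem, Finset.card_image_of_injective _ (arcRank_injective S)]
  · grind [Finset.card_sdiff_add_card_eq_card hTS]
  · grind [arcRank_lt_top]
  · grind [bot_lt_arcRank, bot_ne_top]

end IsCutData

end ArcLabel

section Classification

variable {n e s v w : ℕ} {S T : Finset ℕ} {α β : Type*} {g : ℕ → α} {g' : ℕ → β}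

open Classical in
/-- The cuts of a labelling: the edges of the crown cycle whose endpoints have distinct labels. -/
noncomputable def cutSet (n : ℕ) (g : ℕ → α) : Finset ℕ :=
  {e ∈ crownGround n | g (cyclicNext n e) ≠ g e}

open Classical in
/-- The cuts of a labelling at which those arcs start that share a label with `0̂` or `1̂`. -/
noncomputable def mergedCuts (n : ℕ) (g : ℕ → α) : Finset ℕ :=
  {s ∈ cutSet n g | g (cyclicNext n s) = g 0 ∨ g (cyclicNext n s) = g (2 * n + 1)}

theorem mem_cutSet : e ∈ cutSet n g ↔ e ∈ crownGround n ∧ g (cyclicNext n e) ≠ g e := by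
  simp [cutSet]

theorem mem_mergedCuts : s ∈ mergedCuts n g ↔
    s ∈ cutSet n g ∧ (g (cyclicNext n s) = g 0 ∨ g (cyclicNext n s) = g (2 * n + 1)) := by
  simp [mergedCuts]

theorem cutSet_subset : cutSet n g ⊆ crownGround n := fun _ he => (mem_cutSet.1 he).1

theorem cyclicNext_eq_of_notMem_cutSet (he : e ∈ crownGround n) (hS : e ∉ cutSet n g) :
    g (cyclicNext n e) = g e := by
  by_contra hne
  exact hS (mem_cutSet.2 ⟨he, hne⟩)

theorem eq_of_cutSet_eq_empty (hS : cutSet n g = ∅) (hv : v ∈ crownGround n)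
    (hw : w ∈ crownGround n) : g v = g w :=
  cyclicNext_induction (P := (g · = g w)) hw rfl
    (fun _ he h => (cyclicNext_eq_of_notMem_cutSet he (hS ▸ Finset.notMem_empty _)).trans h) v hv

theorem eq_cyclicNext_prevCut_cutSet (hS : (cutSet n g).Nonempty) (hv : v ∈ crownGround n) :
    g v = g (cyclicNext n (prevCut (cutSet n g) v)) :=
  eq_cyclicNext_prevCut cutSet_subset hS (fun _ => cyclicNext_eq_of_notMem_cutSet) v hv

theorem mem_hatCrownGround_of_mem (hv : v ∈ crownGround n) : v ∈ hatCrownGround n :=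
  hatCrownGround_eq_insert n ▸ by simp [hv]

theorem zero_mem_hatCrownGround : 0 ∈ hatCrownGround n := by simp [hatCrownGround]

theorem top_mem_hatCrownGround : 2 * n + 1 ∈ hatCrownGround n := by simp [hatCrownGround]

theorem cutSet_congr
    (h : fiberPartition (hatCrownGround n) g = fiberPartition (hatCrownGround n) g') :
    cutSet n g = cutSet n g' := by
  ext e
  rw [mem_cutSet, mem_cutSet]
  exact and_congr_right fun he => (fiberPartition_eq_iff.1 h _
    (mem_hatCrownGround_of_mem (cyclicNext_mem he)) e (mem_hatCrownGround_of_mem he)).not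

theorem mergedCuts_congr
    (h : fiberPartition (hatCrownGround n) g = fiberPartition (hatCrownGround n) g') :
    mergedCuts n g = mergedCuts n g' := by
  ext s
  rw [mem_mergedCuts, mem_mergedCuts, ← cutSet_congr h]
  refine and_congr_right fun hs => ?_
  have hnext := mem_hatCrownGround_of_mem (cyclicNext_mem (cutSet_subset hs))
  exact or_congr (fiberPartition_eq_iff.1 h _ hnext _ zero_mem_hatCrownGround)
    (fiberPartition_eq_iff.1 h _ hnext _ top_mem_hatCrownGround)

theorem IsCutData.cutSet_arcLabel (h : IsCutData n S T) :
    cutSet n (hatLabel n (arcLabel S T)) = S := by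
  ext e
  rw [mem_cutSet]
  refine ⟨fun ⟨he, hne⟩ => ?_, fun he => ⟨h.subset_crownGround he, ?_⟩⟩
  · rw [hatLabel_of_mem he, hatLabel_of_mem (cyclicNext_mem he)] at hne
    exact not_not.1 (h.arcLabel_cyclicNext_eq_iff.not.1 hne)
  · have heC := h.subset_crownGround he
    rw [hatLabel_of_mem heC, hatLabel_of_mem (cyclicNext_mem heC)]
    exact h.arcLabel_cyclicNext_eq_iff.not.2 (not_not.2 he)

theorem IsCutData.mergedCuts_arcLabel (h : IsCutData n S T) :
    mergedCuts n (hatLabel n (arcLabel S T)) = T := by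
  ext s
  rw [mem_mergedCuts, h.cutSet_arcLabel, hatLabel_zero, hatLabel_top]
  have hTS : T ⊆ S := h.subset_oddLeft.trans (oddLeft_subset S)
  by_cases hs : s ∈ S
  · rw [hatLabel_of_mem (cyclicNext_mem (h.subset_crownGround hs)), h.arcLabel_cyclicNext hs,
      cutLabel_eq_bot_iff, cutLabel_eq_top_iff]
    grind
  · exact iff_of_false (fun h => hs h.1) fun h => hs (hTS h)

theorem fiberPartition_eq_hatLabel [PartialOrder β] [BoundedOrder β] [Nontrivial β] {f : ℕ → β}
    (hne : g 0 ≠ g (2 * n + 1)) (hbot : ∀ v ∈ crownGround n, g v = g 0 ↔ f v = ⊥)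
    (htop : ∀ v ∈ crownGround n, g v = g (2 * n + 1) ↔ f v = ⊤)
    (heq : ∀ v ∈ crownGround n, ∀ w ∈ crownGround n, g v = g w ↔ f v = f w) :
    fiberPartition (hatCrownGround n) g = fiberPartition (hatCrownGround n) (hatLabel n f) := by
  have hcrown : ∀ v ∈ crownGround n, hatLabel n f v = f v := fun v => hatLabel_of_mem
  rw [fiberPartition_eq_iff]
  simp only [hatCrownGround_eq_insert, Finset.forall_mem_insert, hatLabel_zero, hatLabel_top]
  grind [bot_ne_top]

end Classification

section CCPLabel

variable {n e s t v w : ℕ} {α : Type*} [PartialOrder α] {g : ℕ → α}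

/-- A monotone labelling of `Ĉ_{2n}` whose fibres form a connected compatible partition with at
least two blocks. -/
structure IsCCPLabel (n : ℕ) (g : ℕ → α) : Prop where
  monotone : ∀ x ∈ hatCrownGround n, ∀ y ∈ hatCrownGround n, hatCrownLe n x y → g x ≤ g y
  connected : ∀ B ∈ fiberPartition (hatCrownGround n) g, BlockConnected (compGraph (hatCrownLe n)) B
  zero_ne_top : g 0 ≠ g (2 * n + 1)

theorem IsCCP.exists_isCCPLabel {π : Finset (Finset ℕ)}
    (h : IsCCP (hatCrownGround n) (hatCrownLe n) π) (hcard : 2 ≤ π.card) :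
    ∃ (β : Type) (_ : PartialOrder β) (b : ℕ → β),
      IsCCPLabel n b ∧ π = fiberPartition (hatCrownGround n) b := by
  classical
  obtain ⟨β, _, b, hmono, rfl⟩ := h.exists_monotone_label
  refine ⟨β, _, b, ⟨hmono, h.1.2, fun heq => ?_⟩, rfl⟩
  have hconst : ∀ v ∈ hatCrownGround n, b v = b 0 := fun v hv =>
    le_antisymm (heq ▸ hmono v hv _ top_mem_hatCrownGround (.inr (.inr (.inl rfl))))
      (hmono 0 zero_mem_hatCrownGround v hv (.inr (.inl rfl)))
  have hle : (fiberPartition (hatCrownGround n) b).card ≤ ({b 0} : Finset β).card := by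
    rw [card_fiberPartition]
    exact Finset.card_le_card (Finset.image_subset_iff.2 fun v hv => by simp [hconst v hv])
  rw [Finset.card_singleton] at hle
  lia

namespace IsCCPLabel

theorem zero_le (h : IsCCPLabel n g) (hv : v ∈ crownGround n) : g 0 ≤ g v :=
  h.monotone 0 zero_mem_hatCrownGround v (mem_hatCrownGround_of_mem hv) (.inr (.inl rfl))

theorem le_top (h : IsCCPLabel n g) (hv : v ∈ crownGround n) : g v ≤ g (2 * n + 1) :=
  h.monotone v (mem_hatCrownGround_of_mem hv) _ top_mem_hatCrownGround (.inr (.inr (.inl rfl)))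

theorem le_cyclicNext (h : IsCCPLabel n g) (he : e ∈ crownGround n) (hodd : Odd e) :
    g e ≤ g (cyclicNext n e) :=
  h.monotone e (mem_hatCrownGround_of_mem he) _ (mem_hatCrownGround_of_mem (cyclicNext_mem he))
    (hatCrownLe_iff.2 <| .inr <| .inr <| .inr ⟨e, he, .inl ⟨hodd, rfl, rfl⟩⟩)

theorem cyclicNext_le (h : IsCCPLabel n g) (he : e ∈ crownGround n) (heven : Even e) :
    g (cyclicNext n e) ≤ g e :=
  h.monotone _ (mem_hatCrownGround_of_mem (cyclicNext_mem he)) e (mem_hatCrownGround_of_mem he)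
    (hatCrownLe_iff.2 <| .inr <| .inr <| .inr ⟨e, he, .inr ⟨heven, rfl, rfl⟩⟩)

theorem lt_cyclicNext (h : IsCCPLabel n g) (he : e ∈ cutSet n g) (hodd : Odd e) :
    g e < g (cyclicNext n e) :=
  (h.le_cyclicNext (cutSet_subset he) hodd).lt_of_ne (mem_cutSet.1 he).2.symm

theorem cyclicNext_lt (h : IsCCPLabel n g) (he : e ∈ cutSet n g) (heven : Even e) :
    g (cyclicNext n e) < g e :=
  (h.cyclicNext_le (cutSet_subset he) heven).lt_of_ne (mem_cutSet.1 he).2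

theorem even_of_cyclicNext_eq_zero (h : IsCCPLabel n g) (hs : s ∈ cutSet n g)
    (heq : g (cyclicNext n s) = g 0) : Even s := by
  by_contra hodd
  exact (h.zero_le (cutSet_subset hs)).not_gt
    (heq ▸ h.lt_cyclicNext hs (Nat.not_even_iff_odd.1 hodd))

theorem odd_of_cyclicNext_eq_top (h : IsCCPLabel n g) (hs : s ∈ cutSet n g)
    (heq : g (cyclicNext n s) = g (2 * n + 1)) : Odd s := by
  by_contra heven
  exact (h.le_top (cutSet_subset hs)).not_gt
    (heq ▸ h.cyclicNext_lt hs (Nat.not_odd_iff_even.1 heven))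

theorem odd_of_eq_zero (h : IsCCPLabel n g) (ht : t ∈ cutSet n g) (heq : g t = g 0) : Odd t := by
  by_contra heven
  exact (h.zero_le (cyclicNext_mem (cutSet_subset ht))).not_gt
    (heq ▸ h.cyclicNext_lt ht (Nat.not_odd_iff_even.1 heven))

theorem even_of_eq_top (h : IsCCPLabel n g) (ht : t ∈ cutSet n g) (heq : g t = g (2 * n + 1)) :
    Even t := by
  by_contra hodd
  exact (h.le_top (cyclicNext_mem (cutSet_subset ht))).not_gt
    (heq ▸ h.lt_cyclicNext ht (Nat.not_even_iff_odd.1 hodd))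

theorem mergedCuts_subset_oddLeft (h : IsCCPLabel n g) :
    mergedCuts n g ⊆ oddLeft (cutSet n g) := fun s hs => by
  obtain ⟨hsS, heq⟩ := mem_mergedCuts.1 hs
  obtain ⟨t, ht, rfl⟩ := Finset.mem_image.1 (image_prevCut (cutSet n g) ▸ hsS)
  rw [prevCut_mem_oddLeft_iff ht]
  rw [← eq_cyclicNext_prevCut_cutSet ⟨t, ht⟩ (cutSet_subset ht)] at heq
  have harc := eq_cyclicNext_prevCut_cutSet ⟨t, ht⟩ (cutSet_subset ht)
  rcases heq with heq | heq
  · grind [h.even_of_cyclicNext_eq_zero hsS (harc ▸ heq), h.odd_of_eq_zero ht heq]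
  · grind [h.odd_of_cyclicNext_eq_top hsS (harc ▸ heq), h.even_of_eq_top ht heq]

theorem oddLeft_cutSet_nonempty (h : IsCCPLabel n g) (hS : (cutSet n g).Nonempty) :
    (oddLeft (cutSet n g)).Nonempty := by
  by_contra hempty
  rw [Finset.not_nonempty_iff_eq_empty] at hempty
  obtain ⟨s, hs⟩ := hS
  have hparity : ∀ t ∈ cutSet n g, (Even s ↔ Even t) := fun t ht =>
    even_iff_even_of_oddLeft_eq_empty cutSet_subset hempty hs ht
  have hnext := cyclicNext_mem (cutSet_subset hs)
  refine (mem_cutSet.1 hs).2 ?_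
  rcases Nat.even_or_odd s with heven | hodd
  · refine eq_of_cyclicNext_le (f := g) (fun e he => ?_) hnext (cutSet_subset hs)
    by_cases heS : e ∈ cutSet n g
    · exact h.cyclicNext_le he ((hparity e heS).1 heven)
    · exact (cyclicNext_eq_of_notMem_cutSet he heS).le
  · refine eq_of_cyclicNext_le (f := OrderDual.toDual ∘ g) (fun e he => ?_) hnext (cutSet_subset hs)
    by_cases heS : e ∈ cutSet n g
    · exact h.le_cyclicNext he (by grind)
    · exact (cyclicNext_eq_of_notMem_cutSet he heS).ge

theorem isCutData (h : IsCCPLabel n g) (hS : (cutSet n g).Nonempty) :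
    IsCutData n (cutSet n g) (mergedCuts n g) :=
  ⟨cutSet_subset, h.mergedCuts_subset_oddLeft, h.oddLeft_cutSet_nonempty hS⟩

theorem prevCut_cutSet_eq (h : IsCCPLabel n g) (hS : (cutSet n g).Nonempty)
    (hv : v ∈ crownGround n) (hw : w ∈ crownGround n) (heq : g v = g w) (hzero : g v ≠ g 0)
    (htop : g v ≠ g (2 * n + 1)) : prevCut (cutSet n g) v = prevCut (cutSet n g) w := by
  have hle : ∀ a b, g a = g v → g b = g v → hatCrownLe n a b →
      prevCut (cutSet n g) a = prevCut (cutSet n g) b := fun a b ha hb hab => by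
    have hedge : ∀ e ∈ crownGround n, g (cyclicNext n e) = g e →
        prevCut (cutSet n g) (cyclicNext n e) = prevCut (cutSet n g) e := fun e _ hne =>
      prevCut_cyclicNext_of_notMem cutSet_subset hS fun heS => (mem_cutSet.1 heS).2 hne
    rcases hatCrownLe_iff.1 hab with rfl | rfl | rfl | ⟨e, he, ⟨-, rfl, rfl⟩ | ⟨-, rfl, rfl⟩⟩
    · rfl
    · exact absurd ha.symm hzero
    · exact absurd hb.symm htop
    · exact (hedge a he (hb.trans ha.symm)).symm
    · exact hedge b he (ha.trans hb.symm)
  have hvG := mem_hatCrownGround_of_mem hv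
  refine (h.connected _ (Finset.mem_image_of_mem _ hvG)).eq_of_forall_adj (fun a ha b hb hab => ?_)
    (mem_fiber.2 ⟨hvG, rfl⟩) (mem_fiber.2 ⟨mem_hatCrownGround_of_mem hw, heq.symm⟩)
  rw [mem_fiber] at ha hb
  rcases hab.2 with hab | hba
  · exact hle a b ha.2 hb.2 hab
  · exact (hle b a hb.2 ha.2 hba).symm

theorem eq_zero_iff (h : IsCCPLabel n g) (hS : (cutSet n g).Nonempty) (hv : v ∈ crownGround n) :
    g v = g 0 ↔ arcLabel (cutSet n g) (mergedCuts n g) v = ⊥ := by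
  have hs := prevCut_mem hS v
  have harc := eq_cyclicNext_prevCut_cutSet hS hv
  rw [arcLabel, cutLabel_eq_bot_iff, mem_mergedCuts, ← harc]
  refine ⟨fun heq => ⟨⟨hs, .inl heq⟩, h.even_of_cyclicNext_eq_zero hs (harc ▸ heq)⟩, ?_⟩
  rintro ⟨⟨-, heq | heq⟩, heven⟩
  · exact heq
  · exact absurd heven (Nat.not_even_iff_odd.2 (h.odd_of_cyclicNext_eq_top hs (harc ▸ heq)))

theorem eq_top_iff (h : IsCCPLabel n g) (hS : (cutSet n g).Nonempty) (hv : v ∈ crownGround n) :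
    g v = g (2 * n + 1) ↔ arcLabel (cutSet n g) (mergedCuts n g) v = ⊤ := by
  have hs := prevCut_mem hS v
  have harc := eq_cyclicNext_prevCut_cutSet hS hv
  rw [arcLabel, cutLabel_eq_top_iff, mem_mergedCuts, ← harc]
  refine ⟨fun heq => ⟨⟨hs, .inr heq⟩, h.odd_of_cyclicNext_eq_top hs (harc ▸ heq)⟩, ?_⟩
  rintro ⟨⟨-, heq | heq⟩, hodd⟩
  · exact absurd hodd (Nat.not_odd_iff_even.2 (h.even_of_cyclicNext_eq_zero hs (harc ▸ heq)))
  · exact heq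

theorem fiberPartition_eq_arcLabel (h : IsCCPLabel n g) (hS : (cutSet n g).Nonempty) :
    fiberPartition (hatCrownGround n) g =
      fiberPartition (hatCrownGround n) (hatLabel n (arcLabel (cutSet n g) (mergedCuts n g))) := by
  have hzero := fun v => h.eq_zero_iff (v := v) hS
  have htop := fun v => h.eq_top_iff (v := v) hS
  refine fiberPartition_eq_hatLabel h.zero_ne_top hzero htop fun v hv w hw => ?_
  by_cases hv0 : g v = g 0
  · rw [(hzero v hv).1 hv0, hv0, eq_comm, hzero w hw, eq_comm]
  by_cases hv1 : g v = g (2 * n + 1)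
  · rw [(htop v hv).1 hv1, hv1, eq_comm, htop w hw, eq_comm]
  have harc := eq_cyclicNext_prevCut_cutSet hS hv
  have hvT : prevCut (cutSet n g) v ∉ mergedCuts n g := by
    rw [mem_mergedCuts, ← harc]
    tauto
  rw [arcLabel, eq_comm (a := cutLabel _ _ _), arcLabel, cutLabel_eq_iff hvT]
  refine ⟨fun heq => (h.prevCut_cutSet_eq hS hv hw heq hv0 hv1).symm, fun heq => ?_⟩
  rw [harc, ← heq, ← eq_cyclicNext_prevCut_cutSet hS hw]

theorem exists_fiberPartition_eq_const (h : IsCCPLabel n g) (hS : cutSet n g = ∅) :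
    ∃ c : Fin 3, fiberPartition (hatCrownGround n) g =
      fiberPartition (hatCrownGround n) (hatLabel n fun _ => c) := by
  have hone : ∀ v ∈ crownGround n, g v = g 1 := fun v hv =>
    eq_of_cutSet_eq_empty hS hv (by grind [mem_crownGround])
  have hbot : (1 : Fin 3) ≠ ⊥ := by decide
  have htop : (1 : Fin 3) ≠ ⊤ := by decide
  have hvalue : ∃ c : Fin 3, (g 1 = g 0 ↔ c = ⊥) ∧ (g 1 = g (2 * n + 1) ↔ c = ⊤) := by
    by_cases hzero : g 1 = g 0
    · exact ⟨⊥, by grind [h.zero_ne_top, bot_ne_top]⟩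
    by_cases hmax : g 1 = g (2 * n + 1)
    · exact ⟨⊤, by grind [bot_ne_top]⟩
    · exact ⟨1, by grind⟩
  obtain ⟨c, hc⟩ := hvalue
  exact ⟨c, fiberPartition_eq_hatLabel h.zero_ne_top (fun v hv => hone v hv ▸ hc.1)
    (fun v hv => hone v hv ▸ hc.2) fun v hv w hw => by simp [hone v hv, hone w hw]⟩

end IsCCPLabel

end CCPLabel

section CountCCPs

variable {n k : ℕ}

/-- The partition of `Ĉ_{2n}` with a crown-constant labelling, for each of the three choices of
the label: that of `0̂`, that of `1̂`, or a third one. -/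
noncomputable def constPartition (n : ℕ) (c : Fin 3) : Finset (Finset ℕ) :=
  fiberPartition (hatCrownGround n) (hatLabel n fun _ => c)

/-- The partition of `Ĉ_{2n}` encoded by the cuts `p.1` and the merged cuts `p.2`. -/
noncomputable def cutPartition (n : ℕ) (p : Σ _ : Finset ℕ, Finset ℕ) : Finset (Finset ℕ) :=
  fiberPartition (hatCrownGround n) (hatLabel n (arcLabel p.1 p.2))

open Classical in
/-- The cut data that encode partitions with `k + 2` blocks. -/
noncomputable def cutData (n k : ℕ) : Finset (Σ _ : Finset ℕ, Finset ℕ) :=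
  {S ∈ (crownGround n).powerset | (oddLeft S).Nonempty}.sigma fun S =>
    {T ∈ (oddLeft S).powerset | T.card + k = S.card}

theorem mem_cutData {p : Σ _ : Finset ℕ, Finset ℕ} :
    p ∈ cutData n k ↔ IsCutData n p.1 p.2 ∧ p.2.card + k = p.1.card := by
  simp only [cutData, Finset.mem_sigma, Finset.mem_filter, Finset.mem_powerset]
  exact ⟨fun ⟨⟨hS, hne⟩, hT, hcard⟩ => ⟨⟨hS, hT, hne⟩, hcard⟩,
    fun ⟨⟨hS, hT, hne⟩, hcard⟩ => ⟨⟨hS, hne⟩, hT, hcard⟩⟩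

theorem injOn_cutPartition : Set.InjOn (cutPartition n) (cutData n k) := by
  rintro ⟨S, T⟩ hp ⟨S', T'⟩ hp' heq
  have h : IsCutData n S T := (mem_cutData.1 hp).1
  have h' : IsCutData n S' T' := (mem_cutData.1 hp').1
  have hS : S = S' := by rw [← h.cutSet_arcLabel, cutSet_congr heq, h'.cutSet_arcLabel]
  have hT : T = T' := by rw [← h.mergedCuts_arcLabel, mergedCuts_congr heq, h'.mergedCuts_arcLabel]
  rw [hS, hT]

theorem cutPartition_mem_hatCCPs {p : Σ _ : Finset ℕ, Finset ℕ} (hp : p ∈ cutData n k) :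
    cutPartition n p ∈ hatCCPs n (k + 2) := by
  obtain ⟨h, hcard⟩ := mem_cutData.1 hp
  have hblocks : (cutPartition n p).card + _ = _ := h.card_fiberPartition_arcLabel
  exact ⟨h.isCCP_arcLabel, by lia⟩

theorem injective_constPartition (hn : 0 < n) : Function.Injective (constPartition n) :=
  fun c c' h => by
    have hone : 1 ∈ crownGround n := mem_crownGround.2 ⟨le_rfl, by lia⟩
    have hiff := fiberPartition_eq_iff.1 h 1 (mem_hatCrownGround_of_mem hone)
    have hzero := hiff 0 zero_mem_hatCrownGround
    have htop := hiff _ top_mem_hatCrownGround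
    simp only [hatLabel_of_mem hone, hatLabel_zero, hatLabel_top] at hzero htop
    clear hiff h hone
    decide +revert

theorem isCCP_constPartition (hn : 0 < n) (c : Fin 3) :
    IsCCP (hatCrownGround n) (hatCrownLe n) (constPartition n c) := by
  refine isCCP_hatLabel (fun _ _ _ => le_rfl) (fun _ _ _ => le_rfl) fun v _ _ _ => ?_
  convert blockConnected_crownGround hn using 1
  ext w
  simp

theorem card_constPartition (hn : 0 < n) (c : Fin 3) :
    (constPartition n c).card = (if c = 1 then 1 else 0) + 2 := by
  have hne : (crownGround n).Nonempty := ⟨1, mem_crownGround.2 ⟨le_rfl, by lia⟩⟩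
  rw [constPartition, card_fiberPartition_hatLabel, Finset.image_const hne]
  clear hne hn
  decide +revert

theorem constPartition_ne_cutPartition {p : Σ _ : Finset ℕ, Finset ℕ} (hp : p ∈ cutData n k)
    (c : Fin 3) : constPartition n c ≠ cutPartition n p := fun heq => by
  have h := (mem_cutData.1 hp).1
  obtain ⟨e, he⟩ := h.nonempty
  rw [← h.cutSet_arcLabel, ← cutSet_congr heq, mem_cutSet] at he
  rw [hatLabel_of_mem he.1, hatLabel_of_mem (cyclicNext_mem he.1)] at he
  exact he.2 rfl

theorem mem_hatCCPs_iff (hn : 0 < n) {π : Finset (Finset ℕ)} : π ∈ hatCCPs n (k + 2) ↔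
    (∃ p ∈ cutData n k, cutPartition n p = π) ∨
      ∃ c : Fin 3, (if c = 1 then 1 else 0) = k ∧ constPartition n c = π := by
  refine ⟨fun ⟨hccp, hcard⟩ => ?_, ?_⟩
  · obtain ⟨β, _, g, hg, rfl⟩ := hccp.exists_isCCPLabel (by lia)
    rcases (cutSet n g).eq_empty_or_nonempty with hS | hS
    · obtain ⟨c, hc⟩ := hg.exists_fiberPartition_eq_const hS
      refine .inr ⟨c, ?_, hc.symm⟩
      rw [hc] at hcard
      exact Nat.add_right_cancel ((card_constPartition hn c).symm.trans hcard)
    · have heq := hg.fiberPartition_eq_arcLabel hS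
      have hblocks := (hg.isCutData hS).card_fiberPartition_arcLabel
      rw [← heq, hcard, add_right_comm] at hblocks
      have hcuts := (add_comm _ _).trans (Nat.add_right_cancel hblocks)
      exact .inl ⟨⟨_, _⟩, mem_cutData.2 ⟨hg.isCutData hS, hcuts⟩, heq.symm⟩
  · rintro (⟨p, hp, rfl⟩ | ⟨c, rfl, rfl⟩)
    · exact cutPartition_mem_hatCCPs hp
    · exact ⟨isCCP_constPartition hn c, card_constPartition hn c⟩

theorem ncard_hatCCPs (hn : 0 < n) : (hatCCPs n (k + 2)).ncard =
    (if k = 0 then 2 else if k = 1 then 1 else 0) + (cutData n k).card := by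
  have hccps : hatCCPs n (k + 2) = ↑(({c : Fin 3 | (if c = 1 then 1 else 0) = k} : Finset _).image
      (constPartition n) ∪ (cutData n k).image (cutPartition n)) := by
    ext π
    simp [mem_hatCCPs_iff hn, or_comm]
  have hdisjoint : Disjoint (({c : Fin 3 | (if c = 1 then 1 else 0) = k} : Finset _).image
      (constPartition n)) ((cutData n k).image (cutPartition n)) := by
    rw [Finset.disjoint_left]
    intro π hπ hπ'
    obtain ⟨c, -, rfl⟩ := Finset.mem_image.1 hπ
    obtain ⟨p, hp, heq⟩ := Finset.mem_image.1 hπ'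
    exact constPartition_ne_cutPartition hp c heq.symm
  have hconst : ({c : Fin 3 | (if c = 1 then 1 else 0) = k} : Finset _).card =
      if k = 0 then 2 else if k = 1 then 1 else 0 := by
    rcases k with _ | _ | k
    · decide
    · decide
    · exact Finset.card_eq_zero.2 (Finset.filter_eq_empty_iff.2 fun c _ => by grind)
  rw [hccps, Set.ncard_coe_finset, Finset.card_union_of_disjoint hdisjoint,
    Finset.card_image_of_injective _ (injective_constPartition hn),
    Finset.card_image_of_injOn injOn_cutPartition, hconst]

theorem card_cutData (n k : ℕ) : (cutData n k).card =
    ∑ S ∈ (crownGround n).powerset with (oddLeft S).Nonempty,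
      if k ≤ S.card then (oddRight S).card.choose (S.card - k) else 0 := by
  rw [cutData, Finset.card_sigma]
  refine Finset.sum_congr rfl fun S _ => ?_
  rw [← card_oddLeft, ← Finset.card_powersetCard]
  split_ifs with hk
  · congr 1
    grind
  · rw [Finset.card_eq_zero, Finset.filter_eq_empty_iff]
    lia

end CountCCPs

section LinearCount

variable {N a c i t : ℕ} {S : Finset ℕ}

/-- The linear analogue of `oddRight`: the elements of `S` at odd distance from the preceding one,
where the least element is preceded by the virtual element `0`. -/
def oddSteps (S : Finset ℕ) : Finset ℕ := S.filter fun t => Odd (lastBelow S t + t)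

theorem oddRight_eq_oddSteps (hS : Even (S.sup id)) : oddRight S = oddSteps S := by
  refine Finset.filter_congr fun t _ => ?_
  rw [prevCut]
  split_ifs with h
  · rfl
  · have hempty : S.filter (· < t) = ∅ := Finset.filter_eq_empty_iff.2 (by grind)
    rw [lastBelow, hempty, Finset.sup_empty, bot_eq_zero]
    grind

theorem sup_id_insert_of_forall_lt (ha : ∀ x ∈ S, x < a) : (insert a S).sup id = a := by
  rw [sup_id_eq_iff (Finset.insert_nonempty a S)]
  grind

theorem lastBelow_insert (ha : t ≤ a) : lastBelow (insert a S) t = lastBelow S t := by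
  rw [lastBelow, Finset.filter_insert, if_neg ha.not_gt, lastBelow]

theorem card_oddSteps_insert (ha : ∀ x ∈ S, x < a) :
    (oddSteps (insert a S)).card = (oddSteps S).card + if Odd (S.sup id + a) then 1 else 0 := by
  have hlast : lastBelow (insert a S) a = S.sup id := by
    rw [lastBelow_insert le_rfl, lastBelow, Finset.filter_true_of_mem ha]
  have hold : S.filter (fun t => Odd (lastBelow (insert a S) t + t)) = oddSteps S :=
    Finset.filter_congr fun t ht => by rw [lastBelow_insert (ha t ht).le]
  rw [oddSteps, Finset.filter_insert, hold, hlast]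
  split_ifs
  · exact Finset.card_insert_of_notMem fun h => (ha a (Finset.mem_filter.1 h).1).false
  · rfl

theorem even_card_oddSteps_iff (S : Finset ℕ) : Even (oddSteps S).card ↔ Even (S.sup id) := by
  induction S using Finset.induction_on_max with
  | empty => simp [oddSteps]
  | insert a S ha ih =>
    rw [card_oddSteps_insert ha, sup_id_insert_of_forall_lt ha]
    grind

theorem card_oddSteps_insert_eq_iff (ha : ∀ x ∈ S, x < a) :
    (oddSteps (insert a S)).card = c ↔
      Even (a + c) ∧ ((oddSteps S).card = c ∨ (oddSteps S).card + 1 = c) := by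
  have hparity := even_card_oddSteps_iff S
  rw [card_oddSteps_insert ha]
  grind

/-- The `i`-element subsets of `{1,…,N}` with `c` odd steps. -/
def linearCuts (N i c : ℕ) : Finset (Finset ℕ) :=
  {S ∈ (Finset.Icc 1 N).powersetCard i | (oddSteps S).card = c}

theorem card_filter_insert_of_card_linearCuts
    (h : ∀ c, (linearCuts N i c).card = i.choose c * ((N + c) / 2).choose i) (c : ℕ) :
    {S ∈ (Finset.Icc 1 N).powersetCard i | (oddSteps (insert (N + 1) S)).card = c}.card =
      if Even (N + 1 + c) then (i + 1).choose c * ((N + c) / 2).choose i else 0 := by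
  have hiff : ∀ S ∈ (Finset.Icc 1 N).powersetCard i, (oddSteps (insert (N + 1) S)).card = c ↔
      Even (N + 1 + c) ∧ ((oddSteps S).card = c ∨ (oddSteps S).card + 1 = c) := fun S hS =>
    card_oddSteps_insert_eq_iff fun x hx =>
      Nat.lt_succ_of_le (Finset.mem_Icc.1 ((Finset.mem_powersetCard.1 hS).1 hx)).2
  rw [Finset.filter_congr hiff]
  split_ifs with hc
  · simp only [hc, true_and]
    rw [Finset.filter_or, Finset.card_union_of_disjoint (Finset.disjoint_filter.2 (by lia))]
    change (linearCuts N i c).card + _ = _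
    rw [h c]
    cases c with
    | zero => simp
    | succ c =>
      simp only [Nat.add_right_cancel_iff]
      change _ + (linearCuts N i c).card = _
      rw [h c, Nat.choose_succ_succ, show (N + (c + 1)) / 2 = (N + c) / 2 by grind]
      ring
  · simp [hc]

theorem injOn_insert_powersetCard (ha : a ∉ S) :
    Set.InjOn (insert a) (SetLike.coe (S.powersetCard i)) :=
  fun R hR R' hR' h => by
    rw [Finset.mem_coe, Finset.mem_powersetCard] at hR hR'
    rw [← Finset.erase_insert (fun h => ha (hR.1 h)), h,
      Finset.erase_insert fun h => ha (hR'.1 h)]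

theorem filter_mem_powersetCard_insert (ha : a ∉ S) :
    {R ∈ (insert a S).powersetCard (i + 1) | a ∈ R} = (S.powersetCard i).image (insert a) := by
  rw [Finset.powersetCard_succ_insert ha, Finset.filter_union, Finset.filter_image,
    Finset.filter_true_of_mem fun R _ => Finset.mem_insert_self a R, Finset.union_eq_right]
  intro R hR
  rw [Finset.mem_filter, Finset.mem_powersetCard] at hR
  exact absurd (hR.1.1 hR.2) ha

theorem card_linearCuts_succ (N i c : ℕ) : (linearCuts (N + 1) (i + 1) c).card =
    (linearCuts N (i + 1) c).card +
      {S ∈ (Finset.Icc 1 N).powersetCard i | (oddSteps (insert (N + 1) S)).card = c}.card := by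
  have hmem : N + 1 ∉ Finset.Icc 1 N := by simp
  have hdisjoint : Disjoint ((Finset.Icc 1 N).powersetCard (i + 1))
      (((Finset.Icc 1 N).powersetCard i).image (insert (N + 1))) := by
    rw [Finset.disjoint_left]
    intro S hS hS'
    obtain ⟨S', -, rfl⟩ := Finset.mem_image.1 hS'
    exact hmem ((Finset.mem_powersetCard.1 hS).1 (Finset.mem_insert_self _ _))
  rw [linearCuts, ← Finset.insert_Icc_right_eq_Icc_add_one (by lia),
    Finset.powersetCard_succ_insert hmem, Finset.filter_union,
    Finset.card_union_of_disjoint (Finset.disjoint_filter_filter hdisjoint), Finset.filter_image,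
    Finset.card_image_of_injOn ((injOn_insert_powersetCard hmem).mono (Finset.filter_subset _ _)),
    linearCuts]

theorem card_linearCuts_zero (N c : ℕ) : (linearCuts N 0 c).card = Nat.choose 0 c := by
  rw [linearCuts, Finset.powersetCard_zero, Finset.filter_singleton]
  cases c <;> simp [oddSteps]

theorem card_linearCuts (N i c : ℕ) :
    (linearCuts N i c).card = i.choose c * ((N + c) / 2).choose i := by
  induction N generalizing i c with
  | zero =>
    rcases i with _ | i
    · simp [card_linearCuts_zero]
    · have hempty : (linearCuts 0 (i + 1) c).card = 0 := by simp [linearCuts]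
      rw [hempty, eq_comm, Nat.mul_eq_zero, Nat.choose_eq_zero_iff, Nat.choose_eq_zero_iff]
      lia
  | succ N ih =>
    rcases i with _ | i
    · simp [card_linearCuts_zero]
    · rw [card_linearCuts_succ, ih, card_filter_insert_of_card_linearCuts (ih i)]
      split_ifs with hc
      · rw [show (N + 1 + c) / 2 = (N + c) / 2 + 1 by grind, Nat.choose_succ_succ _ i]
        ring
      · rw [show (N + 1 + c) / 2 = (N + c) / 2 by grind, add_zero]

end LinearCount

section CyclicCount

variable {n c i v : ℕ} {S : Finset ℕ}

theorem image_cyclicNext_subset (hS : S ⊆ crownGround n) :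
    S.image (cyclicNext n) ⊆ crownGround n :=
  Finset.image_subset_iff.2 fun _ hv => cyclicNext_mem (hS hv)

theorem cyclicNext_mem_image_iff (hS : S ⊆ crownGround n) (hv : v ∈ crownGround n) :
    cyclicNext n v ∈ S.image (cyclicNext n) ↔ v ∈ S := by
  rw [← Finset.mem_coe, Finset.coe_image, injOn_cyclicNext.mem_image_iff hS hv, Finset.mem_coe]

theorem prevCut_image_cyclicNext (hS : S ⊆ crownGround n) (hne : S.Nonempty) :
    ∀ v ∈ crownGround n,
      prevCut (S.image (cyclicNext n)) (cyclicNext n v) = cyclicNext n (prevCut S v) :=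
  arc_induction (P := fun s v => prevCut (S.image (cyclicNext n)) (cyclicNext n v) = cyclicNext n s)
    hS hne
    (fun _ hs => prevCut_cyclicNext_of_mem (image_cyclicNext_subset hS)
      (Finset.mem_image_of_mem _ hs))
    fun _ hv hvS h => (prevCut_cyclicNext_of_notMem (image_cyclicNext_subset hS) (hne.image _)
      ((cyclicNext_mem_image_iff hS hv).not.2 hvS)).trans h

theorem card_image_cyclicNext (hS : S ⊆ crownGround n) :
    (S.image (cyclicNext n)).card = S.card :=
  Finset.card_image_of_injOn (injOn_cyclicNext.mono hS)

theorem card_oddRight_image_cyclicNext (hS : S ⊆ crownGround n) :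
    (oddRight (S.image (cyclicNext n))).card = (oddRight S).card := by
  have himage : oddRight (S.image (cyclicNext n)) = (oddRight S).image (cyclicNext n) := by
    rw [oddRight, Finset.filter_image, oddRight]
    congr 1
    refine Finset.filter_congr fun t ht => ?_
    rw [prevCut_image_cyclicNext hS ⟨t, ht⟩ t (hS ht)]
    grind [odd_cyclicNext, even_cyclicNext]
  exact himage ▸ card_image_cyclicNext ((Finset.filter_subset _ _).trans hS)

/-- The sets of `i` cuts of the crown cycle that bound exactly `c` odd arcs. -/
def cyclicCuts (n i c : ℕ) : Finset (Finset ℕ) :=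
  {S ∈ (crownGround n).powersetCard i | (oddRight S).card = c}

theorem mem_cyclicCuts :
    S ∈ cyclicCuts n i c ↔ S ⊆ crownGround n ∧ S.card = i ∧ (oddRight S).card = c := by
  rw [cyclicCuts, Finset.mem_filter, Finset.mem_powersetCard, and_assoc]

theorem card_filter_mem_le_card_filter_cyclicNext_mem (n i c v : ℕ) :
    {S ∈ cyclicCuts n i c | v ∈ S}.card ≤ {S ∈ cyclicCuts n i c | cyclicNext n v ∈ S}.card := by
  refine Finset.card_le_card_of_injOn (Finset.image (cyclicNext n)) (fun S hS => ?_) ?_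
  · simp only [Finset.mem_coe, Finset.mem_filter, mem_cyclicCuts] at hS ⊢
    obtain ⟨⟨hSC, hi, hc⟩, hvS⟩ := hS
    exact ⟨⟨image_cyclicNext_subset hSC, (card_image_cyclicNext hSC).trans hi,
      (card_oddRight_image_cyclicNext hSC).trans hc⟩, Finset.mem_image_of_mem _ hvS⟩
  · refine (Finset.image_injOn_powerset_of_injOn injOn_cyclicNext).mono fun S hS => ?_
    exact Finset.mem_powerset.2 (mem_cyclicCuts.1 (Finset.mem_filter.1 hS).1).1

theorem mul_card_cyclicCuts (hv : v ∈ crownGround n) :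
    i * (cyclicCuts n i c).card = 2 * n * {S ∈ cyclicCuts n i c | v ∈ S}.card := by
  have hconst : ∀ w ∈ crownGround n,
      {S ∈ cyclicCuts n i c | w ∈ S}.card = {S ∈ cyclicCuts n i c | v ∈ S}.card := fun w hw =>
    eq_of_cyclicNext_le (f := fun w => OrderDual.toDual {S ∈ cyclicCuts n i c | w ∈ S}.card)
      (fun w _ => OrderDual.toDual_le_toDual.2
        (card_filter_mem_le_card_filter_cyclicNext_mem n i c w)) hw hv
  have hcard : ∀ S ∈ cyclicCuts n i c, {w ∈ crownGround n | w ∈ S}.card = i := fun S hS => by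
    obtain ⟨hSC, hi, -⟩ := mem_cyclicCuts.1 hS
    rw [Finset.filter_mem_eq_inter, Finset.inter_eq_right.2 hSC, hi]
  have hdouble : ∑ S ∈ cyclicCuts n i c, {w ∈ crownGround n | w ∈ S}.card =
      ∑ w ∈ crownGround n, {S ∈ cyclicCuts n i c | w ∈ S}.card :=
    Finset.sum_card_bipartiteAbove_eq_sum_card_bipartiteBelow fun S w => w ∈ S
  rwa [Finset.sum_const_nat hconst, Finset.sum_const_nat hcard, crownGround, Nat.card_Icc,
    Nat.add_sub_cancel, mul_comm] at hdouble

theorem card_filter_top_mem (hn : 0 < n) (m : ℕ) :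
    {S ∈ cyclicCuts n (i + 1) (2 * m) | 2 * n ∈ S}.card =
      (i + 1).choose (2 * m) * (n + m - 1).choose i := by
  obtain ⟨N, hN⟩ : ∃ N, 2 * n = N + 1 := ⟨2 * n - 1, by lia⟩
  have hmem : N + 1 ∉ Finset.Icc 1 N := by simp
  have hcrown : crownGround n = insert (N + 1) (Finset.Icc 1 N) := by
    rw [crownGround, hN, Finset.insert_Icc_right_eq_Icc_add_one (by lia)]
  have hsteps : ∀ S ∈ (Finset.Icc 1 N).powersetCard i,
      oddRight (insert (N + 1) S) = oddSteps (insert (N + 1) S) := fun S hS => by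
    apply oddRight_eq_oddSteps
    rw [sup_id_insert_of_forall_lt fun x hx => Nat.lt_succ_of_le
      (Finset.mem_Icc.1 ((Finset.mem_powersetCard.1 hS).1 hx)).2, Nat.succ_eq_add_one, ← hN]
    exact even_two_mul n
  rw [cyclicCuts, Finset.filter_comm, hN, hcrown, filter_mem_powersetCard_insert hmem,
    Finset.filter_image, Finset.card_image_of_injOn
      ((injOn_insert_powersetCard hmem).mono (Finset.filter_subset _ _)),
    Finset.filter_congr fun S hS => by rw [hsteps S hS],
    card_filter_insert_of_card_linearCuts (card_linearCuts N i), if_pos (by grind)]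
  congr 2
  lia

theorem card_cyclicCuts (hn : 0 < n) (hi : 0 < i) (m : ℕ) :
    ((cyclicCuts n i (2 * m)).card : ℚ) =
      2 * n / i * i.choose (2 * m) * (n + m - 1).choose (i - 1) := by
  obtain ⟨i, rfl⟩ := Nat.exists_eq_add_one.2 hi
  have htop : 2 * n ∈ crownGround n := mem_crownGround.2 ⟨by lia, le_rfl⟩
  have hmul := mul_card_cyclicCuts (i := i + 1) (c := 2 * m) htop
  rw [card_filter_top_mem hn] at hmul
  have hmulQ := congr_arg (Nat.cast : ℕ → ℚ) hmul
  push_cast at hmulQ ⊢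
  field_simp
  rw [mul_comm, hmulQ]
  ring

theorem card_cutData_eq_sum (n k : ℕ) : (cutData n k).card =
    ∑ i ∈ Finset.Icc 2 (2 * n), ∑ m ∈ Finset.Icc 1 (i / 2),
      (cyclicCuts n i (2 * m)).card * if k ≤ i then (2 * m).choose (i - k) else 0 := by
  have hmaps : ∀ S ∈ (crownGround n).powerset.filter (oddLeft · |>.Nonempty),
      (⟨S.card, (oddRight S).card / 2⟩ : Σ _ : ℕ, ℕ) ∈
        (Finset.Icc 2 (2 * n)).sigma fun i => Finset.Icc 1 (i / 2) := fun S hS => by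
    rw [Finset.mem_filter, Finset.mem_powerset, ← Finset.card_pos, card_oddLeft] at hS
    have hle := Finset.card_le_card hS.1
    rw [crownGround, Nat.card_Icc] at hle
    have hodd : (oddRight S).card ≤ S.card := Finset.card_filter_le _ _
    grind [even_card_oddRight S]
  rw [card_cutData, Finset.sum_sigma', ← Finset.sum_fiberwise_of_maps_to hmaps]
  refine Finset.sum_congr rfl fun ⟨i, m⟩ hp => ?_
  have hm : 1 ≤ m := (Finset.mem_Icc.1 (Finset.mem_sigma.1 hp).2).1
  have hfiber : {S ∈ (crownGround n).powerset.filter (oddLeft · |>.Nonempty) |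
      (⟨S.card, (oddRight S).card / 2⟩ : Σ _ : ℕ, ℕ) = ⟨i, m⟩} = cyclicCuts n i (2 * m) := by
    ext S
    have heven := even_card_oddRight S
    rw [Finset.mem_filter, Finset.mem_filter, Finset.mem_powerset, mem_cyclicCuts,
      ← Finset.card_pos, card_oddLeft, Sigma.mk.injEq, heq_eq_eq]
    clear hmaps
    grind
  rw [hfiber]
  exact Finset.sum_const_nat fun S hS => by
    obtain ⟨-, hi, hm⟩ := mem_cyclicCuts.1 hS
    rw [hi, hm]

end CyclicCount

/-- Theorem 3.7: the number of `(k+2)`-CCPs of `Ĉ_{2n}` (equivalently, the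
number `f_k` of `k`-dimensional faces of the order polytope `O(C_{2n})`) equals
`δ_k + Σ_{i=2}^{2n} Σ_{m=1}^{⌊i/2⌋} (2n/i) C(i,2m) C(n+m−1,i−1) C(2m,i−k)`. -/
theorem fvector_formula (n : ℕ) (hn : 2 ≤ n) (k : ℕ) :
    ((hatCCPs n (k + 2)).ncard : ℚ)
      = (if k = 0 then 2 else if k = 1 then 1 else 0)
        + ∑ i ∈ Finset.Icc 2 (2 * n), ∑ m ∈ Finset.Icc 1 (i / 2),
            (2 * n : ℚ) / i * (i.choose (2 * m) : ℚ) * ((n + m - 1).choose (i - 1) : ℚ)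
              * (if k ≤ i then ((2 * m).choose (i - k) : ℚ) else 0) := by
  rw [ncard_hatCCPs (by lia), card_cutData_eq_sum]
  push_cast
  refine congr_arg _ (Finset.sum_congr rfl fun i hi => Finset.sum_congr rfl fun m _ => ?_)
  rw [card_cyclicCuts (by lia) (two_pos.trans_le (Finset.mem_Icc.1 hi).1)]
end

section
/- Let n ≥ 2 and let L be the Lucas sequence defined by L(0) = 2, L(1) = 1, and L(k) = L(k−1) + L(k−2) for k > 1. Then the number of antichains of the crown poset C_{2n} equals L(2n), and moreover L(2n) = 2 + Σ_{i=2}^{2n} Σ_{m=1}^{⌊i/2⌋} (2n/i) · C(i, 2m) · C(n+m−1, i−1) · C(2m, i), where the identity holds in ℚ. -/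
/-- The Lucas sequence: `L(0) = 2`, `L(1) = 1`, `L(k) = L(k−1) + L(k−2)`. -/
def lucas : ℕ → ℕ
  | 0 => 2
  | 1 => 1
  | k + 2 => lucas (k + 1) + lucas k

/-!
An antichain of the crown `C_{2n}` either avoids the element `2n`, and is then an antichain of the
fence on `{1, …, 2n-1}`, or contains it, and is then determined by an antichain of the fence on
`{2, …, 2n-2}`. Deleting an end point in the same way shows that a fence on `k` elements has
`F (k+2)` antichains, `F` being the Fibonacci sequence, so the crown has
`F (2n+1) + F (2n-1) = L (2n)`.

In the double sum, `C(i, 2m) C(2m, i)` vanishes unless `i = 2m`. The remaining terms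
`(2n / 2m) C(n+m-1, 2m-1) = C(n+m, 2m) + C(n+m-1, 2m)` split the sum into the antidiagonal sums of
binomial coefficients for `F (2n+1)` and `F (2n-1)`, each without its leading `1`.
-/

open Finset Relation

section Antichains

variable {α : Type*}

open scoped Classical in
/-- The family of antichains of the relation `r` contained in `s`. As with `IsAntichain`, no order
axioms on `r` are required. -/
noncomputable def antichainsIn (r : α → α → Prop) (s : Finset α) : Finset (Finset α) :=
  {A ∈ s.powerset | IsAntichain r (A : Set α)}

variable {r : α → α → Prop} {s A : Finset α} {z : α}

theorem mem_antichainsIn : A ∈ antichainsIn r s ↔ A ⊆ s ∧ IsAntichain r (A : Set α) := by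
  simp only [antichainsIn, mem_filter, mem_powerset]

theorem notMem_of_mem_antichainsIn (hz : z ∉ s) (hA : A ∈ antichainsIn r s) : z ∉ A :=
  notMem_mono (mem_antichainsIn.1 hA).1 hz

theorem antichainsIn_empty (r : α → α → Prop) : antichainsIn r ∅ = {∅} := by
  ext A
  simp +contextual [mem_antichainsIn, subset_empty]

variable [DecidableEq α]

theorem mem_antichainsIn_insert_of_notMem (hA : z ∉ A) :
    A ∈ antichainsIn r (insert z s) ↔ A ∈ antichainsIn r s := by
  rw [mem_antichainsIn, mem_antichainsIn, subset_insert_iff_of_notMem hA]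

variable [DecidablePred (IncompRel r · z)]

theorem insert_mem_antichainsIn_insert (hA : z ∉ A) :
    insert z A ∈ antichainsIn r (insert z s) ↔
      A ∈ antichainsIn r {x ∈ s | IncompRel r x z} := by
  simp only [mem_antichainsIn, coe_insert, isAntichain_insert, insert_subset_insert_iff hA,
    subset_iff, IncompRel]
  grind

theorem antichainsIn_insert (hz : z ∉ s) :
    antichainsIn r (insert z s) =
      antichainsIn r s ∪ (antichainsIn r {x ∈ s | IncompRel r x z}).image (insert z) := by
  ext A
  rw [mem_union, mem_image]
  constructor
  · intro h
    by_cases hA : z ∈ A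
    · refine .inr ⟨A.erase z, ?_, insert_erase hA⟩
      rwa [← insert_mem_antichainsIn_insert (notMem_erase z A), insert_erase hA]
    · exact .inl ((mem_antichainsIn_insert_of_notMem hA).1 h)
  · rintro (h | ⟨B, hB, rfl⟩)
    · exact (mem_antichainsIn_insert_of_notMem (notMem_of_mem_antichainsIn hz h)).2 h
    · have hzB : z ∉ B := notMem_of_mem_antichainsIn (fun h => hz (mem_filter.1 h).1) hB
      exact (insert_mem_antichainsIn_insert hzB).2 hB

theorem card_antichainsIn_insert (hz : z ∉ s) :
    #(antichainsIn r (insert z s)) =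
      #(antichainsIn r s) + #(antichainsIn r {x ∈ s | IncompRel r x z}) := by
  have hz' : z ∉ {x ∈ s | IncompRel r x z} := fun h => hz (mem_filter.1 h).1
  have disj : Disjoint (antichainsIn r s)
      ((antichainsIn r {x ∈ s | IncompRel r x z}).image (insert z)) := by
    simp only [disjoint_left, mem_image]
    rintro _ hA ⟨B, -, rfl⟩
    exact notMem_of_mem_antichainsIn hz hA (mem_insert_self z B)
  have inj : Set.InjOn (insert z) (antichainsIn r {x ∈ s | IncompRel r x z} : Set (Finset α)) :=
    insert_erase_invOn.2.injOn.mono fun _ => notMem_of_mem_antichainsIn hz'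
  rw [antichainsIn_insert hz, card_union_of_disjoint disj, card_image_of_injOn inj]

end Antichains

section Fence

/-- The relation `r` restricts to a fence (zigzag poset) on `s`, up to the direction of its
relations: the comparable pairs are exactly those of consecutive integers. -/
def IsFenceOn (r : ℕ → ℕ → Prop) (s : Finset ℕ) : Prop :=
  ∀ x ∈ s, ∀ y ∈ s, x < y → (SymmGen r x y ↔ y = x + 1)

variable {r : ℕ → ℕ → Prop} {s t : Finset ℕ}

theorem IsFenceOn.mono (h : IsFenceOn r t) (hst : s ⊆ t) : IsFenceOn r s :=
  fun x hx y hy => h x (hst hx) y (hst hy)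

theorem IsFenceOn.card_antichainsIn {a k : ℕ} (h : IsFenceOn r (Ico a (a + k))) :
    #(antichainsIn r (Ico a (a + k))) = Nat.fib (k + 2) := by
  classical
  induction k using Nat.twoStepInduction with
  | zero => simp [antichainsIn_empty]
  | one =>
    rw [Nat.Ico_succ_singleton, ← insert_empty_eq, card_antichainsIn_insert (notMem_empty a),
      filter_empty, antichainsIn_empty, card_singleton]
    rfl
  | more k ih₀ ih₁ =>
    have last : Ico a (a + (k + 2)) = insert (a + (k + 1)) (Ico a (a + (k + 1))) := by
      grind
    have incomp : {x ∈ Ico a (a + (k + 1)) | IncompRel r x (a + (k + 1))} = Ico a (a + k) := by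
      ext x
      have comparable := fun hx => h x hx (a + (k + 1)) (by simp)
      simp only [mem_filter, ← not_symmGen_iff]
      grind
    rw [last, card_antichainsIn_insert (by simp), incomp,
      ih₀ (h.mono (Ico_subset_Ico_right (by lia))), ih₁ (h.mono (Ico_subset_Ico_right (by lia))),
      Nat.fib_add_two (n := k + 2), add_comm]

end Fence

theorem lucas_succ (k : ℕ) : lucas (k + 1) = Nat.fib k + Nat.fib (k + 2) := by
  induction k using Nat.twoStepInduction with
  | zero => rfl
  | one => rfl
  | more k ih₀ ih₁ =>
    rw [lucas, ih₀, ih₁]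
    grind [Nat.fib_add_two]

section Crown

variable {n : ℕ}

theorem symmGen_crownLe_iff {x y : ℕ} (hx : 1 ≤ x) (hxy : x < y) :
    SymmGen (crownLe n) x y ↔ y = x + 1 ∨ x = 1 ∧ y = 2 * n := by
  grind [SymmGen, crownLe, crownCover]

theorem isFenceOn_crownLe : IsFenceOn (crownLe n) (Ico 1 (2 * n)) := by
  intro x hx y hy hxy
  rw [mem_Ico] at hx hy
  rw [symmGen_crownLe_iff hx.1 hxy]
  lia

theorem card_antichainsIn_crown (hn : 2 ≤ n) :
    #(antichainsIn (crownLe n) (crownGround n)) = lucas (2 * n) := by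
  classical
  obtain ⟨k, rfl⟩ := Nat.exists_eq_add_of_le' hn
  have fence : IsFenceOn (crownLe (k + 2)) (Ico 1 (2 * (k + 2))) := isFenceOn_crownLe
  have ground : crownGround (k + 2) = insert (2 * (k + 2)) (Ico 1 (1 + (2 * k + 3))) := by
    grind [crownGround]
  have incomp : {x ∈ Ico 1 (1 + (2 * k + 3)) | IncompRel (crownLe (k + 2)) x (2 * (k + 2))} =
      Ico 2 (2 + (2 * k + 1)) := by
    ext x
    have comparable := symmGen_crownLe_iff (n := k + 2) (x := x) (y := 2 * (k + 2))
    simp only [mem_filter, ← not_symmGen_iff]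
    grind
  rw [ground, card_antichainsIn_insert (by simp; lia), incomp,
    (fence.mono (Ico_subset_Ico (by lia) (by lia))).card_antichainsIn,
    (fence.mono (Ico_subset_Ico (by lia) (by lia))).card_antichainsIn,
    show 2 * (k + 2) = (2 * k + 3) + 1 by lia, lucas_succ, add_comm]

end Crown

section LucasSum

theorem sum_range_choose_two_mul (n : ℕ) :
    ∑ m ∈ range (n + 1), (n + m).choose (2 * m) = Nat.fib (2 * n + 1) := by
  have below_diagonal : ∑ k ∈ range n, k.choose (2 * n - k) = 0 :=
    sum_eq_zero fun k hk => Nat.choose_eq_zero_of_lt (by grind)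
  rw [Nat.fib_succ_eq_sum_choose, Nat.sum_antidiagonal_eq_sum_range_succ Nat.choose,
    show (2 * n).succ = n + (n + 1) by lia, sum_range_add _ n (n + 1), below_diagonal, zero_add]
  refine sum_congr rfl fun m hm => ?_
  rw [show 2 * n - (n + m) = n - m by lia]
  exact Nat.choose_symm_of_eq_add (by grind)

theorem one_add_sum_Icc_choose_two_mul (n : ℕ) :
    1 + ∑ m ∈ Icc 1 n, (n + m).choose (2 * m) = Nat.fib (2 * n + 1) := by
  rw [← sum_range_choose_two_mul, sum_range_eq_add_Ico _ n.add_one_pos, Nat.choose_zero_right,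
    Ico_add_one_right_eq_Icc]

theorem lucas_two_mul_eq_sum (n : ℕ) :
    lucas (2 * n) =
      2 + ∑ m ∈ Icc 1 n, ((n + m).choose (2 * m) + (n + m - 1).choose (2 * m)) := by
  cases n with
  | zero => rfl
  | succ n =>
    have shifted : ∑ m ∈ Icc 1 (n + 1), (n + 1 + m - 1).choose (2 * m) =
        ∑ m ∈ Icc 1 n, (n + m).choose (2 * m) := by
      rw [sum_Icc_succ_top (by lia), Nat.choose_eq_zero_of_lt (by lia), add_zero]
      exact sum_congr rfl fun m _ => by rw [Nat.add_right_comm, Nat.add_sub_cancel]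
    rw [sum_add_distrib, shifted, mul_add_one, lucas_succ, ← one_add_sum_Icc_choose_two_mul,
      show 2 * n + 1 + 2 = 2 * (n + 1) + 1 by lia, ← one_add_sum_Icc_choose_two_mul]
    lia

theorem choose_add_choose_succ_eq_div_mul {K : Type*} [Field K] [CharZero K] (n k : ℕ) :
    ((n + 1).choose (k + 1) + n.choose (k + 1) : K) =
      (2 * n + 1 - k) / (k + 1) * n.choose k := by
  have absorb : (n + 1 : K) * n.choose k = (n + 1).choose (k + 1) * (k + 1) := by
    exact_mod_cast Nat.add_one_mul_choose_eq n k
  have pascal : ((n + 1).choose (k + 1) : K) = n.choose k + n.choose (k + 1) := by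
    exact_mod_cast Nat.choose_succ_succ n k
  have : (k + 1 : K) ≠ 0 := by exact_mod_cast k.succ_ne_zero
  field_simp
  linear_combination (-2) * absorb - (k + 1) * pascal

theorem two_mul_div_two_mul_mul_choose {K : Type*} [Field K] [CharZero K] (n : ℕ) {m : ℕ}
    (hm : 1 ≤ m) :
    (2 * n / (2 * m : ℕ) * (n + m - 1).choose (2 * m - 1) : K) =
      (n + m).choose (2 * m) + (n + m - 1).choose (2 * m) := by
  obtain ⟨k, rfl⟩ := Nat.exists_eq_add_of_le' hm
  have h := choose_add_choose_succ_eq_div_mul (K := K) (n + k) (2 * k + 1)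
  rw [show n + (k + 1) = n + k + 1 by lia, show 2 * (k + 1) = 2 * k + 1 + 1 by lia,
    Nat.add_sub_cancel, Nat.add_sub_cancel, h]
  push_cast
  ring

theorem sum_Icc_sum_Icc_half {M : Type*} [AddCommMonoid M] (n : ℕ) {f : ℕ → ℕ → M}
    (hf : ∀ i m, 2 * m < i → f i m = 0) :
    ∑ i ∈ Icc 2 (2 * n), ∑ m ∈ Icc 1 (i / 2), f i m = ∑ m ∈ Icc 1 n, f (2 * m) m := by
  rw [sum_comm' (t' := Icc 1 n) (s' := fun m => Icc (2 * m) (2 * n)) (by grind)]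
  refine sum_congr rfl fun m hm => sum_eq_single_of_mem (2 * m) (by grind) fun i hi hne => ?_
  exact hf i m (by grind)

end LucasSum

/-- The number of antichains of the crown poset `C_{2n}` is the Lucas number
`L(2n)`, and `L(2n) = 2 + Σ_{i=2}^{2n} Σ_{m=1}^{⌊i/2⌋} (2n/i) C(i,2m) C(n+m−1,i−1) C(2m,i)`. -/
theorem crown_antichains_lucas (n : ℕ) (hn : 2 ≤ n) :
    {A : Finset ℕ | A ⊆ crownGround n ∧
        ∀ x ∈ A, ∀ y ∈ A, x ≠ y → ¬ crownLe n x y}.ncard = lucas (2 * n) ∧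
      (lucas (2 * n) : ℚ)
        = 2 + ∑ i ∈ Finset.Icc 2 (2 * n), ∑ m ∈ Finset.Icc 1 (i / 2),
            (2 * n : ℚ) / i * (i.choose (2 * m) : ℚ) * ((n + m - 1).choose (i - 1) : ℚ)
              * ((2 * m).choose i : ℚ) := by
  constructor
  · rw [← card_antichainsIn_crown hn, ← Set.ncard_coe_finset]
    congr 1 with A
    exact mem_antichainsIn.symm
  · rw [sum_Icc_sum_Icc_half n, lucas_two_mul_eq_sum]
    · push_cast
      congr 1
      refine sum_congr rfl fun m hm => ?_
      rw [← two_mul_div_two_mul_mul_choose n (mem_Icc.1 hm).1]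
      simp
    · intro i m hmi
      rw [Nat.choose_eq_zero_of_lt hmi, Nat.cast_zero, mul_zero]
end

section
/- Let n ≥ 1 and let p ∈ ℚ[t] be the unique polynomial of degree at most 2n such that p(m) equals the number of order-preserving maps from the crown poset C_{2n} to the chain {1,…,m} for every integer m ≥ 1 (the order polynomial of C_{2n}). Then the coefficient of t in p equals 1 / C(2n, n). -/
/-- Cover relations of the zigzag poset: `2i−1 ≺ 2i` and `2i+1 ≺ 2i`. -/
def zigCover (x y : ℕ) : Prop :=
  Odd x ∧ Even y ∧ (y = x + 1 ∨ x = y + 1)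

/-- The order relation of the zigzag poset `Z_k` (restricted to `{1,…,k}`). -/
def zigLe (x y : ℕ) : Prop := x = y ∨ zigCover x y

/-- The number of order-preserving maps from the poset with ground set `s` and
order relation `le` to the chain `{1,…,m}` (a map is recorded as a function
`ℕ → ℕ` vanishing outside `s`). -/
noncomputable def omegaOn (s : Finset ℕ) (le : ℕ → ℕ → Prop) (m : ℕ) : ℕ :=
  Set.ncard {f : ℕ → ℕ |
    (∀ x, x ∉ s → f x = 0) ∧ (∀ x ∈ s, f x ∈ Finset.Icc 1 m) ∧
    ∀ x ∈ s, ∀ y ∈ s, le x y → f x ≤ f y}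

/-- The order polynomial value `Ω_{C_{2n}}(m)`. -/
noncomputable def omegaCrown (n m : ℕ) : ℕ := omegaOn (crownGround n) (crownLe n) m

/-- The order polynomial value `Ω_{Z_k}(m)`. -/
noncomputable def omegaZig (k m : ℕ) : ℕ := omegaOn (Finset.Icc 1 k) zigLe m

/-!
Summing over the values at the maximal elements first, an order-preserving map from `C_{2n}` to a
chain of length `m` becomes a closed walk of length `n` weighted by `M = (m - max i j)`, so that the
order polynomial takes the value `tr (M ^ n)`. A determinant recurrence gives
`det (1 - z M) = ∑ j, (-1) ^ j * choose (m + j) (2 * j) * z ^ j`, and Newton's identities express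
`tr (M ^ n)` through these coefficients. As polynomials in `m`, all traces and all coefficients with
`0 < j` vanish at `m = 0`, so the products in Newton's identities have no linear term in `m`. The
linear coefficient sought is therefore that of `-n * (-1) ^ n * choose (m + n) (2 * n)`.
-/

open Finset Polynomial

section Jacobi

variable {R A ι : Type*} [CommRing R] [CommRing A] [Algebra R A] (D : Derivation R A A)

lemma derivation_prod {κ : Type*} [DecidableEq κ] (s : Finset κ) (f : κ → A) :
    D (∏ i ∈ s, f i) = ∑ i ∈ s, (∏ j ∈ s.erase i, f j) * D (f i) := by
  induction s using Finset.induction_on with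
  | empty => simp
  | insert a s ha ih =>
    have h_erase : ∀ i ∈ s, ∏ j ∈ (insert a s).erase i, f j = f a * ∏ j ∈ s.erase i, f j := by
      intro i hi
      rw [erase_insert_of_ne (ne_of_mem_of_not_mem hi ha).symm,
        prod_insert fun h ↦ ha (mem_of_mem_erase h)]
    rw [prod_insert ha, D.leibniz, ih, sum_insert ha, erase_insert ha, smul_eq_mul, smul_eq_mul,
      mul_sum, add_comm]
    congr 1
    exact sum_congr rfl fun i hi ↦ by rw [h_erase i hi, mul_assoc]

variable [Fintype ι] [DecidableEq ι]

theorem derivation_det (M : Matrix ι ι A) : D M.det = (M.adjugate * M.map D).trace := by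
  have h_col (i : ι) : (M.adjugate * M.map D) i i =
      ∑ σ : Equiv.Perm ι, (σ.sign : A) * ((∏ j ∈ univ.erase i, M (σ j) j) * D (M (σ i) i)) := by
    have h_cramer : (M.adjugate * M.map D) i i = (M.updateCol i fun j ↦ D (M j i)).det := by
      rw [← Matrix.cramer_apply, Matrix.cramer_eq_adjugate_mulVec]
      rfl
    rw [h_cramer, Matrix.det_apply']
    refine sum_congr rfl fun σ _ ↦ ?_
    rw [← prod_erase_mul _ _ (mem_univ i), Matrix.updateCol_self]
    congr 2
    exact prod_congr rfl fun j hj ↦ Matrix.updateCol_ne (ne_of_mem_erase hj)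
  simp only [Matrix.trace, Matrix.diag_apply, h_col]
  rw [Matrix.det_apply', map_sum, sum_comm]
  refine sum_congr rfl fun σ _ ↦ ?_
  rw [D.leibniz, D.map_intCast, smul_zero, add_zero, derivation_prod, smul_eq_mul, mul_sum]

end Jacobi

section Newton

variable {R ι : Type*} [CommRing R] [Fintype ι] [DecidableEq ι]

lemma adjugate_one_sub_X_smul_map_coeff (M : Matrix ι ι R) (k : ℕ) :
    (1 - (X : R[X]) • M.map C).adjugate.map (coeff · k) =
      ∑ ij ∈ antidiagonal k, M.charpolyRev.coeff ij.1 • M ^ ij.2 := by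
  set B := (1 - (X : R[X]) • M.map C).adjugate
  have h_mul : B = M.charpolyRev • (1 : Matrix ι ι R[X]) + (X : R[X]) • (B * M.map C) := by
    rw [Matrix.charpolyRev, ← Matrix.adjugate_mul, mul_sub, mul_one, Matrix.mul_smul,
      sub_add_cancel]
  induction k with
  | zero =>
    ext i j
    rw [h_mul]
    simp [Matrix.one_apply, apply_ite (fun p : R[X] ↦ p.coeff 0)]
  | succ k ih =>
    have h_succ : B.map (coeff · (k + 1)) =
        M.charpolyRev.coeff (k + 1) • 1 + B.map (coeff · k) * M := by
      ext i j
      conv_lhs => rw [h_mul]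
      simp [Matrix.one_apply, Matrix.mul_apply, coeff_X_mul,
        apply_ite (fun p : R[X] ↦ p.coeff (k + 1))]
    rw [h_succ, ih, Finset.Nat.sum_antidiagonal_succ', sum_mul]
    simp [pow_succ]

theorem sum_charpolyRev_coeff_mul_trace_pow (M : Matrix ι ι R) (k : ℕ) :
    ∑ ij ∈ antidiagonal k, M.charpolyRev.coeff ij.1 * (M ^ (ij.2 + 1)).trace =
      -((k + 1) * M.charpolyRev.coeff (k + 1)) := by
  set A := 1 - (X : R[X]) • M.map C with hA
  have h_derivative : A.map (derivative' (R := R)) = -M.map C := by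
    ext i j : 2
    by_cases h : i = j <;> simp [hA, h]
  have h_jacobi : derivative M.charpolyRev = -(A.adjugate * M.map C).trace := by
    rw [← Matrix.trace_neg, ← Matrix.mul_neg, ← h_derivative, ← derivation_det]
    rfl
  have h_coeff : (A.adjugate * M.map C).trace.coeff k = (A.adjugate.map (coeff · k) * M).trace := by
    simp [Matrix.trace, Matrix.mul_apply]
  calc ∑ ij ∈ antidiagonal k, M.charpolyRev.coeff ij.1 * (M ^ (ij.2 + 1)).trace
      = (A.adjugate.map (coeff · k) * M).trace := by
        rw [adjugate_one_sub_X_smul_map_coeff, sum_mul, Matrix.trace_sum]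
        simp [pow_succ]
    _ = -(derivative M.charpolyRev).coeff k := by rw [h_jacobi, ← h_coeff, coeff_neg, neg_neg]
    _ = -((k + 1) * M.charpolyRev.coeff (k + 1)) := by rw [coeff_derivative, mul_comm]

theorem exists_eval_eq_trace_pow (M : ∀ m : ℕ, Matrix (Fin m) (Fin m) R) (c : ℕ → R[X])
    (c_zero : c 0 = 1) (hc : ∀ m j, (M m).charpolyRev.coeff j = (c j).eval (m : R)) (k : ℕ) :
    ∃ P : R[X], (∀ m : ℕ, P.eval (m : R) = (M m ^ (k + 1)).trace) ∧
      P.coeff 1 = -((k + 1) * (c (k + 1)).coeff 1) := by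
  induction k using Nat.strong_induction_on with
  | _ k ih =>
    choose! P hP using ih
    have h_lt {i : ℕ} (hi : i ∈ range k) : k - (i + 1) < k := by
      have := mem_range.1 hi
      omega
    have h_trace (m : ℕ) : (M m ^ (k + 1)).trace = -((k + 1) * (c (k + 1)).eval (m : R)) -
        ∑ i ∈ range k, (c (i + 1)).eval (m : R) * (P (k - (i + 1))).eval (m : R) := by
      have h_newton := sum_charpolyRev_coeff_mul_trace_pow (M m) k
      rw [Finset.Nat.sum_antidiagonal_eq_sum_range_succ_mk, sum_range_succ'] at h_newton
      simp only [hc, c_zero, eval_one, one_mul, Nat.sub_zero] at h_newton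
      rw [← h_newton, eq_sub_iff_add_eq']
      congr 1
      refine sum_congr rfl fun i hi ↦ ?_
      rw [(hP _ (h_lt hi)).1]
    have c_coeff_zero (i : ℕ) : (c (i + 1)).coeff 0 = 0 := by
      rw [coeff_zero_eq_eval_zero, ← Nat.cast_zero, ← hc]
      simp [Matrix.charpolyRev, coeff_one]
    have P_coeff_zero (i : ℕ) (hi : i < k) : (P i).coeff 0 = 0 := by
      rw [coeff_zero_eq_eval_zero, ← Nat.cast_zero, (hP i hi).1]
      simp [Matrix.trace]
    refine ⟨-(C ((k : R) + 1) * c (k + 1)) - ∑ i ∈ range k, c (i + 1) * P (k - (i + 1)), ?_, ?_⟩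
    · intro m
      simp [h_trace, eval_finsetSum]
    · have h_sum : ∑ i ∈ range k, (c (i + 1) * P (k - (i + 1))).coeff 1 = 0 := by
        refine sum_eq_zero fun i hi ↦ ?_
        rw [mul_coeff_one, c_coeff_zero, P_coeff_zero _ (h_lt hi), zero_mul, mul_zero, add_zero]
      rw [coeff_sub, coeff_neg, coeff_C_mul, finsetSum_coeff, h_sum, sub_zero]

end Newton

section UpperBoundMatrix

/-- The transfer matrix `(m - max i j)`, with entries cast to `R`, whose `(i, j)` entry counts the
elements of `Fin m` above both `i` and `j`. -/
def upperBoundMatrix (R : Type*) [NatCast R] (m : ℕ) : Matrix (Fin m) (Fin m) R :=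
  .of fun i j ↦ ((m - max i j : ℕ) : R)

lemma upperBoundMatrix_submatrix_succ (R : Type*) [NatCast R] (m : ℕ) :
    (upperBoundMatrix R (m + 1)).submatrix Fin.succ Fin.succ = upperBoundMatrix R m := by
  ext i j
  simp [upperBoundMatrix]

variable {R : Type*} [CommRing R]

theorem det_eq_sub_of_zero_succ_succ {n : ℕ} (A : Matrix (Fin (n + 2)) (Fin (n + 2)) R)
    (h_row : ∀ j : Fin n, A 0 j.succ.succ = 0) (h_col : ∀ i : Fin n, A i.succ.succ 0 = 0) :
    A.det = A 0 0 * (A.submatrix Fin.succ Fin.succ).det -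
      A 0 1 * A 1 0 * ((A.submatrix Fin.succ Fin.succ).submatrix Fin.succ Fin.succ).det := by
  have h_minor : (A.submatrix Fin.succ (Fin.succAbove 1)).det =
      A 1 0 * ((A.submatrix Fin.succ Fin.succ).submatrix Fin.succ Fin.succ).det := by
    rw [Matrix.det_succ_column_zero, Fin.sum_univ_succ]
    simp [h_col, Matrix.submatrix_submatrix, Function.comp_def]
  rw [Matrix.det_succ_row_zero, Fin.sum_univ_succ, Fin.sum_univ_succ]
  simp only [h_row, Fin.succAbove_zero, Fin.succ_zero_eq_one, h_minor, Fin.val_zero, Fin.val_one,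
    mul_zero, zero_mul, sum_const_zero, add_zero]
  ring

theorem det_eq_sub_of_succ_succ_eq {n : ℕ} (A : Matrix (Fin (n + 2)) (Fin (n + 2)) R)
    (h_row : ∀ j : Fin n, A 0 j.succ.succ = A 1 j.succ.succ)
    (h_col : ∀ i : Fin n, A i.succ.succ 0 = A i.succ.succ 1) :
    A.det = (A 0 0 - A 1 0 - (A 0 1 - A 1 1)) * (A.submatrix Fin.succ Fin.succ).det -
      (A 0 1 - A 1 1) * (A 1 0 - A 1 1) *
        ((A.submatrix Fin.succ Fin.succ).submatrix Fin.succ Fin.succ).det := by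
  let A₁ := A.updateRow 0 (A 0 + (-1 : R) • A 1)
  let A₂ := A₁.updateCol 0 fun i ↦ A₁ i 0 + (-1 : R) • A₁ i 1
  have h_det : A₂.det = A.det :=
    (A₁.det_updateCol_add_smul_self Fin.zero_ne_one _).trans
      (A.det_updateRow_add_smul_self Fin.zero_ne_one _)
  have h_sub : A₂.submatrix Fin.succ Fin.succ = A.submatrix Fin.succ Fin.succ := by
    ext i j
    simp [A₂, A₁]
  rw [← h_det, det_eq_sub_of_zero_succ_succ A₂, h_sub]
  · simp [A₂, A₁, sub_eq_add_neg]
  · simp [A₂, A₁, h_row]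
  · simp [A₂, A₁, h_col]

lemma det_one_sub_smul_upperBoundMatrix_add_two (m : ℕ) (z : R) :
    (1 - z • upperBoundMatrix R (m + 2)).det =
      (2 - z) * (1 - z • upperBoundMatrix R (m + 1)).det - (1 - z • upperBoundMatrix R m).det := by
  have h_sub (l : ℕ) : (1 - z • upperBoundMatrix R (l + 1)).submatrix Fin.succ Fin.succ =
      1 - z • upperBoundMatrix R l := by
    rw [Matrix.submatrix_sub, Matrix.submatrix_smul, Pi.sub_apply, Pi.sub_apply, Pi.smul_apply,
      Pi.smul_apply, upperBoundMatrix_submatrix_succ, Matrix.submatrix_one _ (Fin.succ_injective l)]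
  obtain ⟨h₀₀, h₀₁, h₁₀, h₁₁⟩ : (1 - z • upperBoundMatrix R (m + 2)) 0 0 = 1 - z * (m + 2) ∧
      (1 - z • upperBoundMatrix R (m + 2)) 0 1 = -(z * (m + 1)) ∧
      (1 - z • upperBoundMatrix R (m + 2)) 1 0 = -(z * (m + 1)) ∧
      (1 - z • upperBoundMatrix R (m + 2)) 1 1 = 1 - z * (m + 1) := by
    refine ⟨?_, ?_, ?_, ?_⟩ <;> simp [upperBoundMatrix] <;> ring
  rw [det_eq_sub_of_succ_succ_eq, h_sub, h_sub]
  · rw [h₀₀, h₀₁, h₁₀, h₁₁]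
    ring
  · intro j
    simp [upperBoundMatrix, Matrix.one_apply_ne, (Fin.succ_ne_zero _).symm,
      (Fin.succ_succ_ne_one j).symm]
  · intro j
    simp [upperBoundMatrix, Matrix.one_apply_ne, Fin.succ_succ_ne_one]

lemma charpolyRev_upperBoundMatrix_add_two (m : ℕ) :
    (upperBoundMatrix R (m + 2)).charpolyRev =
      (2 - X) * (upperBoundMatrix R (m + 1)).charpolyRev - (upperBoundMatrix R m).charpolyRev := by
  have h_map (l : ℕ) : (upperBoundMatrix R l).map C = upperBoundMatrix R[X] l := by
    ext1 i k
    simp [upperBoundMatrix]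
  simp only [Matrix.charpolyRev, h_map, det_one_sub_smul_upperBoundMatrix_add_two]

lemma choose_add_two_add_choose (a b : ℕ) :
    (a + 3).choose (b + 2) + (a + 1).choose (b + 2) =
      2 * (a + 2).choose (b + 2) + (a + 1).choose b := by
  simp only [Nat.choose_succ_succ']
  ring

theorem charpolyRev_upperBoundMatrix_coeff (m j : ℕ) :
    (upperBoundMatrix R m).charpolyRev.coeff j = (-1) ^ j * ((m + j).choose (2 * j) : R) := by
  induction m using Nat.twoStepInduction generalizing j with
  | zero =>
    cases j with
    | zero => simp [Matrix.charpolyRev]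
    | succ j =>
      rw [Nat.choose_eq_zero_of_lt (by omega)]
      simp [Matrix.charpolyRev, coeff_one]
  | one =>
    rcases j with _ | _ | j
    · simp [coeff_zero_eq_eval_zero]
    · simp [upperBoundMatrix, Matrix.trace]
    · rw [Nat.choose_eq_zero_of_lt (by omega)]
      simp [Matrix.charpolyRev, upperBoundMatrix, coeff_one, coeff_X]
  | more m ih₀ ih₁ =>
    rw [charpolyRev_upperBoundMatrix_add_two, sub_mul, coeff_sub, coeff_sub, coeff_ofNat_mul]
    cases j with
    | zero =>
      rw [coeff_X_mul_zero, ih₀, ih₁]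
      simp only [mul_zero, Nat.choose_zero_right]
      ring
    | succ j =>
      have h_choose := congrArg (Nat.cast (R := R)) (choose_add_two_add_choose (m + j) (2 * j))
      push_cast at h_choose
      rw [coeff_X_mul, ih₀, ih₁, ih₁, show m + 2 + (j + 1) = m + j + 3 by ring,
        show m + 1 + (j + 1) = m + j + 2 by ring, show m + (j + 1) = m + j + 1 by ring,
        show m + 1 + j = m + j + 1 by ring, show 2 * (j + 1) = 2 * j + 2 by ring,
        eq_sub_of_add_eq h_choose]
      ring

end UpperBoundMatrix

section SignedChoose

/-- The polynomial `(-1) ^ j * choose (t + j) (2 * j)` in the variable `t`. -/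
noncomputable def signedChoosePoly (j : ℕ) : ℚ[X] :=
  C ((-1 : ℚ) ^ j / (2 * j).factorial) * (descPochhammer ℚ (2 * j)).comp (X + C (j : ℚ))

lemma signedChoosePoly_zero : signedChoosePoly 0 = 1 := by
  simp [signedChoosePoly]

lemma eval_natCast_signedChoosePoly (j m : ℕ) :
    (signedChoosePoly j).eval (m : ℚ) = (-1) ^ j * ((m + j).choose (2 * j) : ℚ) := by
  rw [Nat.cast_choose_eq_descPochhammer_div]
  simp only [signedChoosePoly, eval_mul, eval_C, eval_comp, eval_add, eval_X, Nat.cast_add]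
  ring

lemma signedChoosePoly_succ_coeff_one (k : ℕ) :
    (signedChoosePoly (k + 1)).coeff 1 = -1 / ((k + 1) * (2 * (k + 1)).choose (k + 1)) := by
  have h_factor : (descPochhammer ℚ (2 * (k + 1))).comp (X + C ((k + 1 : ℕ) : ℚ)) =
      X * ((descPochhammer ℚ (k + 1)).comp (X + C ((k + 1 : ℕ) : ℚ)) *
        (descPochhammer ℚ k).comp (X - 1)) := by
    rw [two_mul, ← descPochhammer_mul, mul_comp, comp_assoc, descPochhammer_succ_left ℚ k]
    simp only [mul_comp, sub_comp, X_comp, natCast_comp, comp_assoc, one_comp, C_eq_natCast,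
      add_sub_cancel_right]
    ring
  have h_neg_one : (descPochhammer ℚ k).eval (-1) = (-1) ^ k * k.factorial := by
    rw [← ascPochhammer_eval_one, ← neg_neg (1 : ℚ), ascPochhammer_eval_neg_eq_descPochhammer]
    simp [← mul_assoc, ← mul_pow]
  have h_factorial : (descPochhammer ℚ (k + 1)).eval ((k + 1 : ℕ) : ℚ) = (k + 1).factorial := by
    rw [descPochhammer_eval_eq_descFactorial, Nat.descFactorial_self]
  have h_sign : ((-1) ^ (k + 1) * (-1) ^ k : ℚ) = -1 := by simp [pow_succ, ← mul_pow]
  calc (signedChoosePoly (k + 1)).coeff 1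
      = (-1) ^ (k + 1) / (2 * (k + 1)).factorial *
          ((k + 1).factorial * ((-1) ^ k * k.factorial)) := by
        rw [signedChoosePoly, h_factor, coeff_C_mul, coeff_X_mul, mul_coeff_zero,
          coeff_zero_eq_eval_zero, coeff_zero_eq_eval_zero, eval_comp, eval_comp]
        simp only [eval_add, eval_sub, eval_X, eval_C, eval_one, zero_add, zero_sub, h_neg_one,
          h_factorial]
    _ = (-1) ^ (k + 1) * (-1) ^ k *
          ((k + 1).factorial * k.factorial / (2 * (k + 1)).factorial) := by ring
    _ = -1 / ((k + 1) * (2 * (k + 1)).choose (k + 1)) := by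
        rw [h_sign, Nat.cast_choose ℚ (by omega : k + 1 ≤ 2 * (k + 1)),
          show 2 * (k + 1) - (k + 1) = k + 1 by omega, Nat.factorial_succ k]
        push_cast
        field_simp

end SignedChoose

section ClosedWalks

lemma matrix_pow_succ_apply_eq_sum_prod {R ι : Type*} [CommSemiring R] [Fintype ι] [DecidableEq ι]
    (M : Matrix ι ι R) (k : ℕ) (a b : ι) :
    (M ^ (k + 1)) a b =
      ∑ x : Fin k → ι,
        ∏ i, M (Fin.cons (α := fun _ ↦ ι) a x i) (Fin.snoc (α := fun _ ↦ ι) x b i) := by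
  induction k generalizing a with
  | zero => simp [Fin.snoc]
  | succ k ih =>
    rw [pow_succ', Matrix.mul_apply, ← (Fin.consEquiv fun _ ↦ ι).sum_comp, Fintype.sum_prod_type]
    refine sum_congr rfl fun c _ ↦ ?_
    rw [ih, mul_sum]
    refine sum_congr rfl fun x _ ↦ ?_
    have h_cons : (Fin.consEquiv fun _ ↦ ι) (c, x) = Fin.cons c x := rfl
    rw [h_cons, ← Fin.cons_snoc_eq_snoc_cons, Fin.prod_univ_succ (n := k + 1)]
    rfl

theorem trace_matrix_pow_eq_sum_prod {R ι : Type*} [CommSemiring R] [Fintype ι] [DecidableEq ι]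
    (M : Matrix ι ι R) (n : ℕ) [NeZero n] :
    (M ^ n).trace = ∑ x : Fin n → ι, ∏ i, M (x i) (x (i + 1)) := by
  obtain ⟨k, rfl⟩ := Nat.exists_eq_succ_of_ne_zero (NeZero.ne n)
  rw [← (Fin.consEquiv fun _ ↦ ι).sum_comp, Fintype.sum_prod_type, Matrix.trace]
  refine sum_congr rfl fun a _ ↦ ?_
  rw [Matrix.diag_apply, matrix_pow_succ_apply_eq_sum_prod]
  refine sum_congr rfl fun x _ ↦ prod_congr rfl fun i _ ↦ ?_
  congr 1
  induction i using Fin.lastCases with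
  | last => simp [Fin.consEquiv]
  | cast i => simp [Fin.consEquiv, Fin.coeSucc_eq_succ]

end ClosedWalks

section Crown

theorem omegaOn_eq_card {α : Type*} {e : α → ℕ} (he : e.Injective) {s : Finset ℕ}
    (hs : ∀ t, t ∈ s ↔ t ∈ Set.range e) (le : ℕ → ℕ → Prop) (m : ℕ) :
    omegaOn s le m = Nat.card {g : α → Fin m // ∀ a b, le (e a) (e b) → g a ≤ g b} := by
  let extend (g : α → Fin m) : ℕ → ℕ := e.extend (fun a ↦ (g a : ℕ) + 1) 0
  have extend_injective : extend.Injective := by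
    intro g g' h
    have := Function.extend_injective he (0 : ℕ → ℕ) h
    ext a
    simpa using congrFun this a
  rw [omegaOn, ← Set.coe_ofPred, Nat.card_coe_set_eq,
    ← Set.ncard_image_of_injective _ extend_injective]
  congr 1
  ext f
  constructor
  · rintro ⟨h_zero, h_range, h_le⟩
    have h_mem (a : α) : 1 ≤ f (e a) ∧ f (e a) ≤ m :=
      mem_Icc.1 (h_range _ ((hs _).2 ⟨a, rfl⟩))
    refine ⟨fun a ↦ ⟨f (e a) - 1, by have := h_mem a; omega⟩, fun a b hab ↦ ?_, ?_⟩
    · exact Nat.sub_le_sub_right (h_le _ ((hs _).2 ⟨a, rfl⟩) _ ((hs _).2 ⟨b, rfl⟩) hab) 1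
    · funext t
      by_cases ht : t ∈ Set.range e
      · obtain ⟨a, rfl⟩ := ht
        simpa [extend, he.extend_apply] using Nat.sub_add_cancel (h_mem a).1
      · simpa [extend, Function.extend_apply' _ _ _ ht] using (h_zero t (mt (hs t).1 ht)).symm
  · rintro ⟨g, h_le, rfl⟩
    simp only [hs, extend]
    refine ⟨fun t ht ↦ Function.extend_apply' _ _ _ ht, ?_, ?_⟩
    · rintro _ ⟨a, rfl⟩
      simp [he.extend_apply]
    · rintro _ ⟨a, rfl⟩ _ ⟨b, rfl⟩ hab
      simpa [he.extend_apply] using h_le a b hab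

/-- Enumeration of the crown `C_{2n}` from `0`: `inl i` is the minimal element `2i + 1` and `inr i`
the maximal element `2i + 2`. -/
def crownElement {n : ℕ} : Fin n ⊕ Fin n → ℕ :=
  Sum.elim (fun i ↦ 2 * i + 1) (fun i ↦ 2 * i + 2)

lemma crownElement_injective (n : ℕ) : (crownElement (n := n)).Injective := by
  rintro (i | i) (j | j) h <;> simp [crownElement] at h ⊢ <;> omega

lemma mem_crownGround_iff (n t : ℕ) :
    t ∈ crownGround n ↔ t ∈ Set.range (crownElement (n := n)) := by
  simp only [crownGround, mem_Icc, Set.mem_range, Sum.exists, crownElement, Sum.elim_inl,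
    Sum.elim_inr]
  constructor
  · rintro ⟨h_pos, h_le⟩
    obtain ⟨i, rfl | rfl⟩ : ∃ i, t = 2 * i + 1 ∨ t = 2 * i + 2 := ⟨(t - 1) / 2, by omega⟩
    · exact .inl ⟨⟨i, by omega⟩, rfl⟩
    · exact .inr ⟨⟨i, by omega⟩, rfl⟩
  · rintro (⟨i, rfl⟩ | ⟨i, rfl⟩) <;> omega

lemma crownCover_crownElement_iff {n : ℕ} [NeZero n] (a b : Fin n ⊕ Fin n) :
    crownCover n (crownElement a) (crownElement b) ↔
      ∃ i, b = .inr i ∧ (a = .inl i ∨ a = .inl (i + 1)) := by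
  rcases a with i | i <;> rcases b with j | j
  · simp [crownCover, crownElement, parity_simps]
  · have h_succ : i = j + 1 ↔ (i : ℕ) = j + 1 ∨ ((i : ℕ) = 0 ∧ (j : ℕ) + 1 = n) := by
      rw [Fin.ext_iff, Fin.val_add, Fin.val_one', Nat.add_mod_mod]
      rcases Nat.lt_or_eq_of_le j.isLt with h_lt | h_eq
      · rw [Nat.mod_eq_of_lt h_lt]
        omega
      · rw [show (j : ℕ) + 1 = n from h_eq, Nat.mod_self]
        omega
    have h_odd : Odd (2 * (i : ℕ) + 1) := odd_two_mul_add_one _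
    have h_even : Even (2 * (j : ℕ) + 2) := ⟨j + 1, by ring⟩
    simp only [crownCover, crownElement, Sum.elim_inl, Sum.elim_inr, h_odd, h_even, true_and,
      Sum.inr.injEq, Sum.inl.injEq, exists_eq_left', h_succ]
    rw [Fin.ext_iff]
    omega
  · simp [crownCover, crownElement, parity_simps]
  · simp [crownCover, crownElement, parity_simps]

theorem omegaCrown_eq_sum_prod (n m : ℕ) [NeZero n] :
    omegaCrown n m = ∑ x : Fin n → Fin m, ∏ i, (m - max (x i) (x (i + 1)) : ℕ) := by
  have h_monotone (g : Fin n ⊕ Fin n → Fin m) :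
      (∀ a b, crownLe n (crownElement a) (crownElement b) → g a ≤ g b) ↔
        ∀ i, max (g (.inl i)) (g (.inl (i + 1))) ≤ g (.inr i) := by
    simp only [crownLe, crownCover_crownElement_iff, (crownElement_injective n).eq_iff, max_le_iff]
    constructor
    · exact fun h i ↦ ⟨h _ _ (.inr ⟨i, rfl, .inl rfl⟩), h _ _ (.inr ⟨i, rfl, .inr rfl⟩)⟩
    · rintro h a b (rfl | ⟨i, rfl, rfl | rfl⟩)
      exacts [le_rfl, (h i).1, (h i).2]
  calc omegaCrown n m
      = Nat.card {g : Fin n ⊕ Fin n → Fin m //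
          ∀ i, max (g (.inl i)) (g (.inl (i + 1))) ≤ g (.inr i)} := by
        rw [omegaCrown, omegaOn_eq_card (crownElement_injective n) (mem_crownGround_iff n)]
        simp only [h_monotone]
    _ = Nat.card {q : (Fin n → Fin m) × (Fin n → Fin m) //
          ∀ i, max (q.1 i) (q.1 (i + 1)) ≤ q.2 i} :=
        Nat.card_congr ((Equiv.sumArrowEquivProdArrow _ _ _).subtypeEquiv fun _ ↦ Iff.rfl)
    _ = Nat.card (Σ x : Fin n → Fin m, ∀ i, {y : Fin m // max (x i) (x (i + 1)) ≤ y}) :=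
        Nat.card_congr ((Equiv.subtypeProdEquivSigmaSubtype fun x y : Fin n → Fin m ↦
          ∀ i, max (x i) (x (i + 1)) ≤ y i).trans
            (Equiv.sigmaCongrRight fun _ ↦ Equiv.subtypePiEquivPi))
    _ = ∑ x : Fin n → Fin m, ∏ i, (m - max (x i) (x (i + 1)) : ℕ) := by
        simp only [Nat.card_sigma, Nat.card_pi]
        refine sum_congr rfl fun x _ ↦ prod_congr rfl fun i _ ↦ ?_
        rw [Nat.subtype_card (Ici (max (x i) (x (i + 1)))) fun _ ↦ mem_Ici, Fin.card_Ici]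

theorem trace_upperBoundMatrix_pow (R : Type*) [CommSemiring R] (n m : ℕ) [NeZero n] :
    (upperBoundMatrix R m ^ n).trace = omegaCrown n m := by
  rw [trace_matrix_pow_eq_sum_prod, omegaCrown_eq_sum_prod]
  push_cast
  rfl

end Crown

/-- Corollary 4.6: the linear coefficient of the order polynomial of the crown
poset `C_{2n}` is `1 / C(2n, n)`. -/
theorem crown_order_polynomial_linear_coeff (n : ℕ) (hn : 1 ≤ n)
    (p : Polynomial ℚ) (hdeg : p.degree ≤ (2 * n : ℕ))
    (heval : ∀ m : ℕ, 1 ≤ m → p.eval (m : ℚ) = omegaCrown n m) :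
    p.coeff 1 = 1 / ((2 * n).choose n : ℚ) := by
  obtain ⟨k, rfl⟩ := Nat.exists_eq_add_of_le' hn
  obtain ⟨P, P_eval, P_coeff⟩ := exists_eval_eq_trace_pow (upperBoundMatrix ℚ) signedChoosePoly
    signedChoosePoly_zero
    (fun m j ↦ by rw [charpolyRev_upperBoundMatrix_coeff, eval_natCast_signedChoosePoly]) k
  have h_agree (m : ℕ) (hm : 1 ≤ m) : p.eval (m : ℚ) = P.eval (m : ℚ) := by
    rw [heval m hm, P_eval, trace_upperBoundMatrix_pow]
  have h_infinite : (Nat.cast '' Set.Ici 1 : Set ℚ).Infinite :=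
    (Set.Ici_infinite 1).image Nat.cast_injective.injOn
  have p_eq : p = P := eq_of_infinite_eval_eq p P <| h_infinite.mono <| by
    rintro _ ⟨m, hm, rfl⟩
    exact h_agree m hm
  rw [p_eq, P_coeff, signedChoosePoly_succ_coeff_one]
  field_simp
end

section
/- Let n ≥ 1 and let p ∈ ℚ[t] be the unique polynomial of degree at most 2n such that p(m) equals the number of order-preserving maps from the crown poset C_{2n} to the chain {1,…,m} for every integer m ≥ 1 (the order polynomial of C_{2n}). Then every coefficient of p is nonnegative. -/
open Finset PowerSeries

section DifferenceEquation

variable {A : Type*} [CommRing A] (x : A)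

/-- The solution of the discrete eigenvalue equation `-Δp = x p` with `p 0 = 0` and `p 1 = 1`.
For `x = 4 sin²θ` it is `sin 2iθ / sin 2θ`. -/
def dirichletSol (x : A) : ℕ → A
  | 0 => 0
  | 1 => 1
  | i + 2 => (2 - x) * dirichletSol x (i + 1) - dirichletSol x i

/-- The increments of `dirichletSol`, which solve the same eigenvalue equation with the Neumann
condition of equal values at `-1` and `0`. For `x = 4 sin²θ` it is `cos (2i + 1)θ / cos θ`. -/
def neumannSol (x : A) (i : ℕ) : A :=
  dirichletSol x (i + 1) - dirichletSol x i

@[simp] lemma dirichletSol_zero : dirichletSol x 0 = 0 := by rw [dirichletSol]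

@[simp] lemma dirichletSol_one : dirichletSol x 1 = 1 := by rw [dirichletSol]

lemma dirichletSol_add_two (i : ℕ) :
    dirichletSol x (i + 2) = (2 - x) * dirichletSol x (i + 1) - dirichletSol x i := by
  rw [dirichletSol]

lemma dirichletSol_succ (i : ℕ) :
    dirichletSol x (i + 1) = dirichletSol x i + neumannSol x i := by
  rw [neumannSol, add_sub_cancel]

@[simp] lemma neumannSol_zero : neumannSol x 0 = 1 := by simp [neumannSol]

lemma neumannSol_succ (i : ℕ) :
    neumannSol x (i + 1) = neumannSol x i - x * dirichletSol x (i + 1) := by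
  rw [neumannSol, neumannSol, dirichletSol_add_two]; ring

-- At `i = 0` the truncated subtraction `i - 1 = 0` implements the Neumann condition.
lemma neumannSol_succ_eq_pred (i : ℕ) :
    neumannSol x (i + 1) = (2 - x) * neumannSol x i - neumannSol x (i - 1) := by
  cases i with
  | zero =>
    rw [neumannSol_succ, zero_add, dirichletSol_one, Nat.zero_sub, neumannSol_zero]
    ring
  | succ i =>
    rw [Nat.add_sub_cancel, neumannSol_succ x (i + 1), dirichletSol_succ x (i + 1)]
    linear_combination -neumannSol_succ x i

lemma neumannSol_add_add_one (i j : ℕ) :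
    neumannSol x (i + j + 1) =
      dirichletSol x (i + 1) * neumannSol x (j + 1) - dirichletSol x i * neumannSol x j := by
  induction i generalizing j with
  | zero => simp
  | succ i ih =>
    rw [add_right_comm i 1 j, add_assoc (i + j), ← add_assoc, add_assoc i j 1, ih (j + 1),
      dirichletSol_add_two, neumannSol_succ_eq_pred x (j + 1), Nat.add_sub_cancel]
    ring

/-- The Green function of `-Δ - x` on `{1,…,m}`, with a Dirichlet condition at `0` and a Neumann
condition between `m` and `m + 1`, multiplied by `neumannSol x m` to avoid a division. -/
def greenFunction (x : A) (m i j : ℕ) : A :=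
  dirichletSol x (min i j) * neumannSol x (m - max i j)

lemma second_difference_greenFunction {m j k : ℕ} (hk : k < m) :
    2 * greenFunction x m (k + 1) (j + 1) - greenFunction x m k (j + 1) -
        greenFunction x m (k + 2) (j + 1) =
      x * greenFunction x m (k + 1) (j + 1) + if k = j then neumannSol x m else 0 := by
  obtain ⟨r, rfl⟩ := Nat.exists_eq_add_of_lt hk
  unfold greenFunction
  rcases lt_trichotomy k j with h | rfl | h
  · have hmin : min (k + 1) (j + 1) = k + 1 ∧ min k (j + 1) = k ∧
        min (k + 2) (j + 1) = k + 2 := by omega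
    have hmax : max (k + 1) (j + 1) = j + 1 ∧ max k (j + 1) = j + 1 ∧
        max (k + 2) (j + 1) = j + 1 := by omega
    simp only [hmin, hmax, if_neg h.ne, dirichletSol_add_two]
    ring
  · have hmin : min k (k + 1) = k ∧ min (k + 2) (k + 1) = k + 1 := by omega
    have hmax : max k (k + 1) = k + 1 ∧ max (k + 2) (k + 1) = k + 2 := by omega
    have hsub : k + r + 1 - (k + 1) = r ∧ k + r + 1 - (k + 2) = r - 1 := by omega
    simp only [hmin, hmax, hsub, min_self, max_self, if_true, neumannSol_add_add_one,
      neumannSol_succ_eq_pred x r]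
    ring
  · have hmin : min (k + 1) (j + 1) = j + 1 ∧ min k (j + 1) = j + 1 ∧
        min (k + 2) (j + 1) = j + 1 := by omega
    have hmax : max (k + 1) (j + 1) = k + 1 ∧ max k (j + 1) = k ∧
        max (k + 2) (j + 1) = k + 2 := by omega
    have hsub : k + r + 1 - (k + 1) = r ∧ k + r + 1 - k = r + 1 ∧
        k + r + 1 - (k + 2) = r - 1 := by omega
    simp only [hmin, hmax, hsub, if_neg h.ne', neumannSol_succ_eq_pred x r]
    ring

lemma sum_min_mul_second_difference (q : ℕ → A) {m i : ℕ} (hi : i ≤ m) :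
    ∑ k ∈ range m, (min i (k + 1) : ℕ) * (2 * q (k + 1) - q k - q (k + 2)) =
      q i - q 0 - i * (q (m + 1) - q m) := by
  let F (k : ℕ) : A := q (min i k) - (min i k : ℕ) * (q (k + 1) - q k)
  have telescope (k : ℕ) :
      (min i (k + 1) : ℕ) * (2 * q (k + 1) - q k - q (k + 2)) = F (k + 1) - F k := by
    rcases lt_or_ge k i with h | h
    · simp only [F, min_eq_right h.le, min_eq_right (Nat.succ_le_of_lt h)]
      push_cast
      ring
    · simp only [F, min_eq_left h, min_eq_left (h.trans k.le_succ)]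
      ring
  rw [sum_congr rfl fun k _ ↦ telescope k, sum_range_sub]
  simp only [F, min_eq_left hi, Nat.min_zero, Nat.cast_zero, zero_mul]
  ring

lemma mul_sum_min_mul_greenFunction_add {m i j : ℕ} (hi : i ≤ m) (hj : j < m) :
    x * ∑ k ∈ range m, (min i (k + 1) : ℕ) * greenFunction x m (k + 1) (j + 1) +
      (min i (j + 1) : ℕ) * neumannSol x m = greenFunction x m i (j + 1) := by
  have hleft : greenFunction x m 0 (j + 1) = 0 := by simp [greenFunction]
  have hright : greenFunction x m (m + 1) (j + 1) = greenFunction x m m (j + 1) := by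
    have hmin : min (m + 1) (j + 1) = j + 1 ∧ min m (j + 1) = j + 1 := by omega
    have hsub : m - max (m + 1) (j + 1) = 0 ∧ m - max m (j + 1) = 0 := by omega
    simp only [greenFunction, hmin, hsub]
  have hsum := sum_min_mul_second_difference (fun k ↦ greenFunction x m k (j + 1)) hi
  rw [hright, hleft, sub_self, mul_zero, sub_zero, sub_zero,
    sum_congr rfl fun k hk ↦ by rw [second_difference_greenFunction x (mem_range.1 hk)]] at hsum
  simpa only [mul_add, sum_add_distrib, mul_ite, mul_zero, sum_ite_eq', mem_range, hj, if_true,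
    mul_sum, mul_left_comm x] using hsum

section Derivation

variable {R : Type*} [CommSemiring R] [Algebra R A] {x} {d : Derivation R A A}

lemma derivation_dirichletSol_neumannSol (hd : d x = 1) (m : ℕ) :
    d (dirichletSol x m) =
        -∑ ij ∈ antidiagonal m, dirichletSol x ij.1 * dirichletSol x ij.2 ∧
      d (neumannSol x m) =
        -∑ ij ∈ antidiagonal m, dirichletSol x ij.1 * neumannSol x ij.2 := by
  induction m with
  | zero => simp
  | succ m ih =>
    have convolution_dirichlet :
        ∑ ij ∈ antidiagonal (m + 1), dirichletSol x ij.1 * dirichletSol x ij.2 =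
          ∑ ij ∈ antidiagonal m, dirichletSol x ij.1 * dirichletSol x (ij.2 + 1) := by
      simp [Nat.sum_antidiagonal_succ']
    have convolution_neumann :
        ∑ ij ∈ antidiagonal (m + 1), dirichletSol x ij.1 * neumannSol x ij.2 =
          dirichletSol x (m + 1) +
            ∑ ij ∈ antidiagonal m, dirichletSol x ij.1 * neumannSol x (ij.2 + 1) := by
      simp [Nat.sum_antidiagonal_succ']
    have hD : d (dirichletSol x (m + 1)) =
        -∑ ij ∈ antidiagonal (m + 1), dirichletSol x ij.1 * dirichletSol x ij.2 := by
      rw [dirichletSol_succ x m, map_add, ih.1, ih.2, convolution_dirichlet]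
      simp only [dirichletSol_succ, mul_add, sum_add_distrib, neg_add]
    refine ⟨hD, ?_⟩
    rw [neumannSol_succ x m, map_sub, Derivation.leibniz, hD, hd, ih.2, convolution_neumann,
      convolution_dirichlet]
    simp only [neumannSol_succ, mul_sub, sum_sub_distrib, smul_eq_mul, mul_left_comm _ x,
      ← mul_sum]
    ring

-- Both identities come from differentiating the closed forms in `θ` for `x = 4 sin²θ`.
lemma four_sub_mul_derivation_neumannSol_dirichletSol (hd : d x = 1) (m : ℕ) :
    (4 - x) * d (neumannSol x m) = -(m * neumannSol x m + (2 * m + 1) * dirichletSol x m) ∧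
    x * (4 - x) * d (dirichletSol x m) =
        2 * m * neumannSol x m + ((m + 1) * x - 2) * dirichletSol x m := by
  induction m with
  | zero => simp
  | succ m ih =>
    obtain ⟨hN, hD⟩ := ih
    simp only [neumannSol_succ, dirichletSol_succ, map_add, map_sub, Derivation.leibniz, hd,
      smul_eq_mul]
    push_cast
    constructor
    · linear_combination (1 - x) * hN - hD
    · linear_combination x * hN + hD

end Derivation

end DifferenceEquation

section PathSums

variable {R ι : Type*} [CommSemiring R] [Fintype ι] [DecidableEq ι]

lemma pow_mulVec_eq_sum_prod (M : Matrix ι ι R) (v : ι → R) (k : ℕ) (i : ι) :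
    (M ^ k).mulVec v i = ∑ w : Fin k → ι, (∏ l : Fin k,
      M ((Fin.cons i w : Fin (k + 1) → ι) l.castSucc) (w l)) *
        v ((Fin.cons i w : Fin (k + 1) → ι) (Fin.last k)) := by
  induction k generalizing i with
  | zero => simp
  | succ k ih =>
    rw [pow_succ', ← Matrix.mulVec_mulVec, Matrix.mulVec, dotProduct,
      ← (Fin.consEquiv fun _ ↦ ι).sum_comp, Fintype.sum_prod_type]
    simp [ih, Fin.prod_univ_succ, mul_sum, Fin.consEquiv, mul_assoc, ← Fin.succ_last]

lemma trace_pow_succ_eq_sum_prod (M : Matrix ι ι R) (k : ℕ) :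
    (M ^ (k + 1)).trace = ∑ a : Fin (k + 1) → ι, ∏ i, M (a i) (a (i + 1)) := by
  have diag (i : ι) : (M ^ (k + 1)) i i = (M ^ k).mulVec (fun j ↦ M j i) i := by
    rw [pow_succ]
    rfl
  rw [← (Fin.consEquiv fun _ ↦ ι).sum_comp, Fintype.sum_prod_type]
  simp [Matrix.trace, diag, pow_mulVec_eq_sum_prod, Fin.prod_univ_castSucc, Fin.consEquiv]

end PathSums

section MinMatrix

/-- The matrix with entry `min i j` in row `i` and column `j`, numbered from `1` to `m`: the number
of elements of the chain below both `i` and `j`. It inverts the discrete second difference. -/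
def minMatrix (R : Type*) [Semiring R] (m : ℕ) : Matrix (Fin m) (Fin m) R :=
  .of fun i j ↦ (min i.val j.val + 1 : ℕ)

variable {A : Type*} [CommRing A] (x : A) (m : ℕ)

/-- The Green function `greenFunction x m` on the positions `1, …, m`. -/
def greenMatrix : Matrix (Fin m) (Fin m) A :=
  .of fun i j ↦ greenFunction x m (i + 1) (j + 1)

lemma one_sub_smul_minMatrix_mul_greenMatrix :
    (1 - x • minMatrix A m) * greenMatrix x m = neumannSol x m • minMatrix A m := by
  rw [sub_mul, one_mul, sub_eq_iff_eq_add']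
  ext i j
  have hsum := mul_sum_min_mul_greenFunction_add x (Nat.succ_le_of_lt i.is_lt) j.is_lt
  rw [← Fin.sum_univ_eq_sum_range fun k ↦
    (min (i + 1) (k + 1) : ℕ) * greenFunction x m (k + 1) (j + 1)] at hsum
  simpa only [greenMatrix, minMatrix, Matrix.of_apply, Matrix.add_apply, Matrix.smul_apply,
    Matrix.smul_mul, Matrix.mul_apply, smul_eq_mul, Nat.succ_eq_add_one, Nat.add_min_add_right,
    mul_comm (neumannSol x m)] using hsum.symm

lemma trace_greenMatrix :
    (greenMatrix x m).trace = ∑ ij ∈ antidiagonal m, dirichletSol x ij.1 * neumannSol x ij.2 := by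
  rw [Nat.sum_antidiagonal_eq_sum_range_succ (fun i j ↦ dirichletSol x i * neumannSol x j),
    sum_range_succ', ← Fin.sum_univ_eq_sum_range
      (fun i ↦ dirichletSol x (i + 1) * neumannSol x (m - (i + 1)))]
  simp [Matrix.trace, greenMatrix, greenFunction]

end MinMatrix

section TraceSeries

variable {R ι : Type*} [Fintype ι] [DecidableEq ι]

/-- The resolvent `(1 - X M)⁻¹ = ∑ Mⁿ Xⁿ` as a matrix of formal power series. -/
def resolventSeries [Semiring R] (M : Matrix ι ι R) : Matrix ι ι R⟦X⟧ :=
  .of fun i j ↦ .mk fun n ↦ (M ^ n) i j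

/-- The generating function `∑ tr(Mⁿ⁺¹) Xⁿ` of the traces of the positive powers of `M`. -/
def traceSeries [Semiring R] (M : Matrix ι ι R) : R⟦X⟧ :=
  .mk fun n ↦ (M ^ (n + 1)).trace

lemma resolventSeries_mul_map_C [CommSemiring R] (M : Matrix ι ι R) :
    resolventSeries M * M.map C = .of fun i j ↦ .mk fun n ↦ (M ^ (n + 1)) i j := by
  ext i j n
  simp [resolventSeries, Matrix.mul_apply, pow_succ]

lemma trace_resolventSeries_mul_map_C [CommSemiring R] (M : Matrix ι ι R) :
    (resolventSeries M * M.map C).trace = traceSeries M := by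
  ext n
  simp [resolventSeries_mul_map_C, traceSeries, Matrix.trace]

lemma resolventSeries_mul_one_sub [CommRing R] (M : Matrix ι ι R) :
    resolventSeries M * (1 - (X : R⟦X⟧) • M.map C) = 1 := by
  rw [mul_sub, mul_one, Matrix.mul_smul, resolventSeries_mul_map_C]
  ext i j n
  cases n with
  | zero => simp [resolventSeries, Matrix.one_apply, apply_ite constantCoeff]
  | succ n =>
    simp [resolventSeries, Matrix.one_apply, coeff_succ_X_mul, apply_ite (coeff (n + 1)), coeff_one]

-- This encodes `neumannSol X m = det (1 - X M)` through its logarithmic derivative.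
lemma neumannSol_mul_traceSeries_minMatrix [CommRing R] (m : ℕ) :
    neumannSol (X : R⟦X⟧) m * traceSeries (minMatrix R m) = -d⁄dX R (neumannSol X m) := by
  have hmap : (minMatrix R m).map C = minMatrix R⟦X⟧ m := by
    ext1 i j
    simp [minMatrix]
  have hgreen : neumannSol (X : R⟦X⟧) m • (resolventSeries (minMatrix R m) * minMatrix R⟦X⟧ m) =
      greenMatrix X m := by
    rw [← Matrix.mul_smul, ← one_sub_smul_minMatrix_mul_greenMatrix, ← hmap, ← mul_assoc,
      resolventSeries_mul_one_sub, one_mul]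
  rw [(derivation_dirichletSol_neumannSol derivative_X m).2, neg_neg, ← trace_greenMatrix,
    ← hgreen, ← hmap, Matrix.trace_smul, trace_resolventSeries_mul_map_C, smul_eq_mul]

end TraceSeries

section Riccati

lemma constantCoeff_neumannSol {R : Type*} [CommRing R] (m : ℕ) :
    constantCoeff (neumannSol (X : R⟦X⟧) m) = 1 := by
  induction m with
  | zero => simp
  | succ m ih => simp [neumannSol_succ, ih]

lemma constantCoeff_dirichletSol {R : Type*} [CommRing R] (m : ℕ) :
    constantCoeff (dirichletSol (X : R⟦X⟧) m) = m := by
  induction m with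
  | zero => simp
  | succ m ih => simp [dirichletSol_succ, ih, constantCoeff_neumannSol]

lemma coeff_X_mul_derivative {R : Type*} [CommSemiring R] (f : R⟦X⟧) (k : ℕ) :
    coeff k (X * d⁄dX R f) = k * coeff k f := by
  cases k <;> simp [coeff_succ_X_mul, coeff_derivative, mul_comm]

variable {K : Type*} [Field K]

/-- The quotient of `dirichletSol` by `neumannSol` as a formal power series in the spectral
parameter. -/
noncomputable def solRatio (K : Type*) [Field K] (m : ℕ) : K⟦X⟧ :=
  dirichletSol X m * (neumannSol X m)⁻¹

lemma neumannSol_ne_zero (m : ℕ) : neumannSol (X : K⟦X⟧) m ≠ 0 := fun h ↦ by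
  simpa [h] using constantCoeff_neumannSol (R := K) m

lemma solRatio_mul_neumannSol (m : ℕ) : solRatio K m * neumannSol X m = dirichletSol X m := by
  rw [solRatio, mul_assoc, PowerSeries.inv_mul_cancel _ (by simp [constantCoeff_neumannSol]),
    mul_one]

lemma constantCoeff_solRatio (m : ℕ) : constantCoeff (solRatio K m) = m := by
  simp [solRatio, constantCoeff_dirichletSol, constantCoeff_neumannSol]

lemma solRatio_riccati (m : ℕ) :
    X * (4 - X) * d⁄dX K (solRatio K m) =
      2 * (m : K⟦X⟧) + ((2 * (m : K⟦X⟧) + 1) * X - 2) * solRatio K m +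
        (2 * (m : K⟦X⟧) + 1) * X * solRatio K m ^ 2 := by
  obtain ⟨hN, hD⟩ := four_sub_mul_derivation_neumannSol_dirichletSol (derivative_X (R := K)) m
  have hr := solRatio_mul_neumannSol (K := K) m
  have hderiv := congrArg (d⁄dX K) hr
  rw [Derivation.leibniz, smul_eq_mul, smul_eq_mul] at hderiv
  refine mul_right_cancel₀ (neumannSol_ne_zero m) ?_
  linear_combination X * (4 - X) * hderiv + hD - X * solRatio K m * hN -
    (((m + 1) * X - 2) + X * solRatio K m * (2 * m + 1)) * hr

lemma four_sub_mul_traceSeries_minMatrix (m : ℕ) :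
    (4 - X) * traceSeries (minMatrix K m) =
      (m : K⟦X⟧) + (2 * (m : K⟦X⟧) + 1) * solRatio K m := by
  have hN := (four_sub_mul_derivation_neumannSol_dirichletSol (derivative_X (R := K)) m).1
  refine mul_right_cancel₀ (neumannSol_ne_zero m) ?_
  linear_combination (4 - X) * neumannSol_mul_traceSeries_minMatrix (R := K) m - hN -
    (2 * m + 1) * solRatio_mul_neumannSol (K := K) m

lemma coeff_succ_solRatio (m k : ℕ) :
    (4 * k + 6) * coeff (k + 1) (solRatio K m) = (k + (2 * m + 1)) * coeff k (solRatio K m) +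
      (2 * m + 1) *
        ∑ ij ∈ antidiagonal k, coeff ij.1 (solRatio K m) * coeff ij.2 (solRatio K m) := by
  have hriccati : C (4 : K) * (X * d⁄dX K (solRatio K m)) - X * (X * d⁄dX K (solRatio K m)) =
      C (2 * m : K) + C (2 * m + 1 : K) * (X * solRatio K m) - C (2 : K) * solRatio K m +
        C (2 * m + 1 : K) * (X * (solRatio K m * solRatio K m)) := by
    simp only [map_add, map_mul, map_ofNat, map_natCast, map_one]
    linear_combination solRatio_riccati (K := K) m
  have hcoeff := congrArg (coeff (k + 1)) hriccati
  simp only [LinearMap.map_add, LinearMap.map_sub, coeff_C_mul, coeff_succ_X_mul,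
    coeff_X_mul_derivative, coeff_derivative, coeff_succ_C] at hcoeff
  rw [coeff_mul] at hcoeff
  linear_combination hcoeff

lemma C_four_mul_traceSeries_minMatrix (m : ℕ) :
    C 4 * traceSeries (minMatrix K m) =
      X * traceSeries (minMatrix K m) + C (m : K) + C (2 * m + 1 : K) * solRatio K m := by
  simp only [map_add, map_mul, map_ofNat, map_natCast, map_one]
  linear_combination four_sub_mul_traceSeries_minMatrix (K := K) m

lemma four_mul_trace_minMatrix (m : ℕ) :
    4 * (minMatrix K m).trace = m + (2 * m + 1) * m := by
  have h := congrArg constantCoeff (C_four_mul_traceSeries_minMatrix (K := K) m)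
  simpa [traceSeries, constantCoeff_solRatio] using h

lemma four_mul_trace_minMatrix_pow_succ (m k : ℕ) :
    4 * (minMatrix K m ^ (k + 2)).trace = (minMatrix K m ^ (k + 1)).trace +
      (2 * m + 1) * coeff (k + 1) (solRatio K m) := by
  have h := congrArg (coeff (k + 1)) (C_four_mul_traceSeries_minMatrix (K := K) m)
  simpa only [LinearMap.map_add, coeff_C_mul, coeff_succ_X_mul, coeff_succ_C, traceSeries, coeff_mk,
    add_zero] using h

end Riccati

section Nonnegativity

/-- The functions of a natural number given by polynomials with nonnegative rational
coefficients. -/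
def nonnegPolyFun : Subalgebra ℚ≥0 (ℕ → ℚ) := Algebra.adjoin ℚ≥0 {fun m : ℕ ↦ (m : ℚ)}

lemma natCast_mem_nonnegPolyFun : (fun m : ℕ ↦ (m : ℚ)) ∈ nonnegPolyFun :=
  Algebra.self_mem_adjoin_singleton ℚ≥0 _

lemma two_mul_add_one_mem_nonnegPolyFun : (fun m : ℕ ↦ (2 * m + 1 : ℚ)) ∈ nonnegPolyFun :=
  add_mem (mul_mem (ofNat_mem _ 2) natCast_mem_nonnegPolyFun) (one_mem _)

lemma mem_nonnegPolyFun_of_natCast_mul_mem {c : ℕ} (hc : c ≠ 0) {f : ℕ → ℚ}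
    (h : (fun m ↦ c * f m) ∈ nonnegPolyFun) : f ∈ nonnegPolyFun := by
  convert nonnegPolyFun.smul_mem h (c : ℚ≥0)⁻¹ using 1
  ext m
  simp [NNRat.smul_def, hc]

lemma coeff_nonneg_of_eval_mem_nonnegPolyFun {p : Polynomial ℚ} {f : ℕ → ℚ}
    (hf : f ∈ nonnegPolyFun) (hp : ∀ m : ℕ, 1 ≤ m → p.eval (m : ℚ) = f m) (k : ℕ) :
    0 ≤ p.coeff k := by
  rw [nonnegPolyFun, Algebra.adjoin_singleton_eq_range_aeval] at hf
  obtain ⟨q, rfl⟩ := hf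
  have hpq : p = q.map (algebraMap ℚ≥0 ℚ) := by
    refine Polynomial.eq_of_infinite_eval_eq _ _ <|
      ((Set.Ici_infinite 1).image Nat.cast_injective.injOn).mono ?_
    rintro _ ⟨m, hm, rfl⟩
    rw [Set.mem_ofPred_eq, hp m hm, Polynomial.eval_map_algebraMap]
    exact (Polynomial.aeval_algHom_apply (Pi.evalAlgHom ℚ≥0 (fun _ : ℕ ↦ ℚ) m) _ q).symm
  rw [hpq, Polynomial.coeff_map]
  exact NNRat.coe_nonneg _

lemma coeff_solRatio_mem_nonnegPolyFun (k : ℕ) :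
    (fun m ↦ coeff k (solRatio ℚ m)) ∈ nonnegPolyFun := by
  induction k using Nat.strong_induction_on with
  | _ k ih =>
    cases k with
    | zero => simpa [constantCoeff_solRatio] using natCast_mem_nonnegPolyFun
    | succ k =>
      have hsquare : (fun m ↦ ∑ ij ∈ antidiagonal k,
          coeff ij.1 (solRatio ℚ m) * coeff ij.2 (solRatio ℚ m)) ∈ nonnegPolyFun := by
        rw [← sum_fn]
        exact sum_mem fun ij hij ↦
          mul_mem (ih _ (Nat.antidiagonal.fst_lt hij)) (ih _ (Nat.antidiagonal.snd_lt hij))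
      refine mem_nonnegPolyFun_of_natCast_mul_mem (c := 4 * k + 6) (by omega) ?_
      push_cast
      simp only [coeff_succ_solRatio]
      exact add_mem
        (mul_mem (add_mem (natCast_mem _ k) two_mul_add_one_mem_nonnegPolyFun)
          (ih k k.lt_succ_self))
        (mul_mem two_mul_add_one_mem_nonnegPolyFun hsquare)

lemma trace_minMatrix_pow_succ_mem_nonnegPolyFun (k : ℕ) :
    (fun m ↦ (minMatrix ℚ m ^ (k + 1)).trace) ∈ nonnegPolyFun := by
  induction k with
  | zero =>
    refine mem_nonnegPolyFun_of_natCast_mul_mem four_ne_zero ?_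
    simp only [Nat.cast_ofNat, zero_add, pow_one, four_mul_trace_minMatrix]
    exact add_mem natCast_mem_nonnegPolyFun
      (mul_mem two_mul_add_one_mem_nonnegPolyFun natCast_mem_nonnegPolyFun)
  | succ k ih =>
    refine mem_nonnegPolyFun_of_natCast_mul_mem four_ne_zero ?_
    simp only [Nat.cast_ofNat, four_mul_trace_minMatrix_pow_succ]
    exact add_mem ih
      (mul_mem two_mul_add_one_mem_nonnegPolyFun (coeff_solRatio_mem_nonnegPolyFun (k + 1)))

end Nonnegativity

section Counting

variable {k m : ℕ}

lemma mem_crownGround_succ {x : ℕ} :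
    x ∈ crownGround (k + 1) ↔ ∃ i : Fin (k + 1), x = 2 * i + 1 ∨ x = 2 * i + 2 := by
  rw [crownGround, mem_Icc]
  constructor
  · intro hx
    exact ⟨⟨(x - 1) / 2, by omega⟩, by dsimp only; omega⟩
  · rintro ⟨i, hi⟩
    omega

lemma crownCover_succ_iff {x y : ℕ} (hx : x ∈ crownGround (k + 1)) (hy : y ∈ crownGround (k + 1)) :
    crownCover (k + 1) x y ↔
      ∃ i j : Fin (k + 1), x = 2 * i + 1 ∧ y = 2 * j + 2 ∧ (i = j ∨ i = j + 1) := by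
  obtain ⟨i, hi⟩ := mem_crownGround_succ.1 hx
  obtain ⟨j, hj⟩ := mem_crownGround_succ.1 hy
  simp only [crownCover, Nat.odd_iff, Nat.even_iff, Fin.ext_iff, Fin.val_add_one, Fin.val_last]
  constructor
  · intro h
    refine ⟨i, j, ?_⟩
    split_ifs <;> omega
  · rintro ⟨i, j, rfl, rfl, h⟩
    split_ifs at h <;> omega

/-- Assembles a map on the crown from its values on the two levels: position `2i + 1` gets
`bottom i` and position `2i + 2` gets `top (i + 1)`, indices being cyclic and values shifted from
`Fin m` to `{1,…,m}`. With this numbering `bottom i` lies below `top i` and `top (i + 1)`. -/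
def crownMap (top bottom : Fin (k + 1) → Fin m) (x : ℕ) : ℕ :=
  if x ∈ crownGround (k + 1) then
    let i := Fin.ofNat (k + 1) ((x - 1) / 2)
    (if Even x then top (i + 1) else bottom i) + 1
  else 0

lemma crownMap_odd (top bottom : Fin (k + 1) → Fin m) (i : Fin (k + 1)) :
    crownMap top bottom (2 * i + 1) = bottom i + 1 := by
  have hi : 2 * (i : ℕ) + 1 ∈ crownGround (k + 1) := mem_crownGround_succ.2 ⟨i, .inl rfl⟩
  have hodd : ¬Even (2 * (i : ℕ) + 1) := by simp
  have hdiv : (2 * (i : ℕ) + 1 - 1) / 2 = i := by omega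
  simp only [crownMap, if_pos hi, if_neg hodd, hdiv, Fin.ofNat_val_eq_self]

lemma crownMap_even (top bottom : Fin (k + 1) → Fin m) (i : Fin (k + 1)) :
    crownMap top bottom (2 * i + 2) = top (i + 1) + 1 := by
  have hi : 2 * (i : ℕ) + 2 ∈ crownGround (k + 1) := mem_crownGround_succ.2 ⟨i, .inr rfl⟩
  have heven : Even (2 * (i : ℕ) + 2) := by simp [Nat.even_add]
  have hdiv : (2 * (i : ℕ) + 2 - 1) / 2 = i := by omega
  simp only [crownMap, if_pos hi, if_pos heven, hdiv, Fin.ofNat_val_eq_self]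

lemma crownMap_injective :
    Function.Injective
      fun c : (_ : Fin (k + 1) → Fin m) × (Fin (k + 1) → Fin m) ↦ crownMap c.1 c.2 := by
  rintro ⟨top, bottom⟩ ⟨top', bottom'⟩ h
  have htop : top = top' := funext fun i ↦ Fin.ext <| by
    simpa only [crownMap_even, sub_add_cancel, Nat.add_right_cancel_iff] using
      congrFun h (2 * (i - 1 : Fin (k + 1)) + 2)
  have hbottom : bottom = bottom' := funext fun i ↦ Fin.ext <| by
    simpa only [crownMap_odd, Nat.add_right_cancel_iff] using congrFun h (2 * i + 1)
  rw [htop, hbottom]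

lemma exists_eq_crownMap {f : ℕ → ℕ} (hzero : ∀ x ∉ crownGround (k + 1), f x = 0)
    (hf : ∀ x ∈ crownGround (k + 1), f x ∈ Icc 1 m) :
    ∃ top bottom : Fin (k + 1) → Fin m, f = crownMap top bottom := by
  have hodd (i : Fin (k + 1)) := mem_Icc.1 (hf _ (mem_crownGround_succ.2 ⟨i, .inl rfl⟩))
  have heven (i : Fin (k + 1)) := mem_Icc.1 (hf _ (mem_crownGround_succ.2 ⟨i, .inr rfl⟩))
  refine ⟨fun i ↦ ⟨f (2 * (i - 1 : Fin (k + 1)) + 2) - 1, ?_⟩, fun i ↦ ⟨f (2 * i + 1) - 1, ?_⟩,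
    funext fun x ↦ ?_⟩
  · have := heven (i - 1)
    omega
  · have := hodd i
    omega
  · by_cases hx : x ∈ crownGround (k + 1)
    · obtain ⟨i, rfl | rfl⟩ := mem_crownGround_succ.1 hx
      · rw [crownMap_odd, Nat.sub_add_cancel (hodd i).1]
      · simp only [crownMap_even, add_sub_cancel_right]
        rw [Nat.sub_add_cancel (heven i).1]
    · rw [hzero x hx, crownMap, if_neg hx]

lemma crownMap_monotone_iff (top bottom : Fin (k + 1) → Fin m) :
    (∀ x ∈ crownGround (k + 1), ∀ y ∈ crownGround (k + 1),
        crownLe (k + 1) x y → crownMap top bottom x ≤ crownMap top bottom y) ↔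
      ∀ i, bottom i ≤ min (top i) (top (i + 1)) := by
  simp only [le_min_iff]
  constructor
  · intro h i
    have hle (j : Fin (k + 1)) (hij : i = j ∨ i = j + 1) : bottom i ≤ top (j + 1) := by
      have hi : 2 * (i : ℕ) + 1 ∈ crownGround (k + 1) := mem_crownGround_succ.2 ⟨i, .inl rfl⟩
      have hj : 2 * (j : ℕ) + 2 ∈ crownGround (k + 1) := mem_crownGround_succ.2 ⟨j, .inr rfl⟩
      have hcover := (crownCover_succ_iff hi hj).2 ⟨i, j, rfl, rfl, hij⟩
      simpa only [crownMap_odd, crownMap_even, Nat.add_le_add_iff_right, Fin.val_fin_le] using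
        h _ hi _ hj (.inr hcover)
    exact ⟨by simpa only [sub_add_cancel] using hle (i - 1) (.inr (sub_add_cancel i 1).symm),
      hle i (.inl rfl)⟩
  · rintro h x hx y hy (rfl | hxy)
    · exact le_rfl
    · obtain ⟨i, j, rfl, rfl, hij⟩ := (crownCover_succ_iff hx hy).1 hxy
      rw [crownMap_odd, crownMap_even, Nat.add_le_add_iff_right, Fin.val_fin_le]
      rcases hij with rfl | rfl
      exacts [(h _).2, (h _).1]

lemma omegaCrown_succ_eq_sum_prod (k m : ℕ) :
    omegaCrown (k + 1) m =
      ∑ top : Fin (k + 1) → Fin m, ∏ i, (min (top i).val (top (i + 1)).val + 1) := by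
  let pairs : Finset ((_ : Fin (k + 1) → Fin m) × (Fin (k + 1) → Fin m)) :=
    univ.sigma fun top ↦ Fintype.piFinset fun i ↦ Iic (min (top i) (top (i + 1)))
  have mem_pairs (c) : c ∈ pairs ↔ ∀ i, c.2 i ≤ min (c.1 i) (c.1 (i + 1)) := by
    simp only [pairs, mem_sigma, mem_univ, true_and, Fintype.mem_piFinset, mem_Iic]
  have card_pairs : #pairs =
      ∑ top : Fin (k + 1) → Fin m, ∏ i, (min (top i).val (top (i + 1)).val + 1) := by
    simp only [pairs, card_sigma, Fintype.card_piFinset, Fin.card_Iic, Fin.coe_min]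
  rw [← card_pairs, ← Set.ncard_coe_finset, ← Set.ncard_image_of_injective _ crownMap_injective,
    omegaCrown, omegaOn]
  congr 1
  ext f
  simp only [Set.mem_ofPred_eq, Set.mem_image, mem_coe, mem_pairs]
  constructor
  · rintro ⟨hzero, hf, hle⟩
    obtain ⟨top, bottom, rfl⟩ := exists_eq_crownMap hzero hf
    exact ⟨⟨top, bottom⟩, (crownMap_monotone_iff top bottom).1 hle, rfl⟩
  · rintro ⟨⟨top, bottom⟩, hle, rfl⟩
    refine ⟨fun x hx ↦ if_neg hx, fun x hx ↦ ?_, (crownMap_monotone_iff top bottom).2 hle⟩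
    simp only [crownMap, if_pos hx, mem_Icc]
    exact ⟨Nat.le_add_left .., Fin.is_lt _⟩

lemma cast_omegaCrown_succ (R : Type*) [CommSemiring R] (k m : ℕ) :
    (omegaCrown (k + 1) m : R) = (minMatrix R m ^ (k + 1)).trace := by
  simp only [omegaCrown_succ_eq_sum_prod, trace_pow_succ_eq_sum_prod, minMatrix, Matrix.of_apply,
    Nat.cast_sum, Nat.cast_prod]

end Counting

/-- Corollary 4.9: all coefficients of the order polynomial of the crown poset
`C_{2n}` are nonnegative. -/
theorem crown_order_polynomial_nonneg_coeffs (n : ℕ) (hn : 1 ≤ n)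
    (p : Polynomial ℚ) (hdeg : p.degree ≤ (2 * n : ℕ))
    (heval : ∀ m : ℕ, 1 ≤ m → p.eval (m : ℚ) = omegaCrown n m) :
    ∀ k, 0 ≤ p.coeff k := by
  obtain ⟨k, rfl⟩ := Nat.exists_eq_add_of_le' hn
  refine coeff_nonneg_of_eval_mem_nonnegPolyFun (trace_minMatrix_pow_succ_mem_nonnegPolyFun k) ?_
  intro m hm
  rw [heval m hm, cast_omegaCrown_succ]
end

section
/- Let n ≥ 1 and let σ be a cyclically alternating permutation of {1,…,2n}. Suppose a, b ∈ {1,…,2n} with b < a and σ⁻¹(b) > σ⁻¹(a) + 1 (that is, the pair of positions (σ⁻¹(a), σ⁻¹(b)) is a relevant inversion of σ). Then there exists k with b ≤ k < a such that σ⁻¹(k) > σ⁻¹(k+1) + 1 (that is, k ∈ CSwap(σ)). -/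
/-- The cyclic successor of an index/value in `Fin m` (i.e. `i + 1 mod m`). -/
def cyclicSucc {m : ℕ} (i : Fin m) : Fin m := ⟨((i : ℕ) + 1) % m, Nat.mod_lt _ i.pos⟩

/-- `σ` (a permutation of `{0,…,2n−1}`, standing for `{1,…,2n}`) is cyclically
alternating: `σ_1 < σ_2 > σ_3 < ⋯ > σ_{2n−1} < σ_{2n} > σ_1` (0-indexed, with
indices taken cyclically). -/
def IsCAP {n : ℕ} (σ : Equiv.Perm (Fin (2 * n))) : Prop :=
  ∀ i : Fin (2 * n),
    (Even (i : ℕ) → σ i < σ (cyclicSucc i)) ∧ (Odd (i : ℕ) → σ (cyclicSucc i) < σ i)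

/-- The cyclic swap set of `σ`: values `k` (with `k+1` also a value, i.e.
`k ∈ {1,…,2n−1}` in 1-indexed terms) such that `σ⁻¹(k) > σ⁻¹(k+1) + 1`. -/
def CSwapSet {n : ℕ} (σ : Equiv.Perm (Fin (2 * n))) : Set (Fin (2 * n)) :=
  {k | (k : ℕ) + 1 < 2 * n ∧
    ((σ⁻¹ (cyclicSucc k) : Fin (2 * n)) : ℕ) + 1 < ((σ⁻¹ k : Fin (2 * n)) : ℕ)}

/-- The cyclic swap statistic `cswap(σ)`. -/
noncomputable def cswap {n : ℕ} (σ : Equiv.Perm (Fin (2 * n))) : ℕ := (CSwapSet σ).ncard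

/-!
For a position `i` with `σ⁻¹ a ≤ i < σ⁻¹ b`, the values `k` running from `b` up to `a` must at some
point cross the gap between the positions `i` and `i + 1`: there is `k` with
`σ⁻¹ (k + 1) ≤ i < σ⁻¹ k`. The only way for such a `k` not to be a cyclic swap is that `k + 1` and
`k` occupy the adjacent positions `i` and `i + 1`, so that `i` is a descent. In a relevant inversion
both `i = σ⁻¹ a` and `i = σ⁻¹ a + 1` are available, and in an alternating permutation they cannot
both be descents.
-/

section SuccOrder

open Order

theorem exists_and_not_succ_of_le {α : Type*} [PartialOrder α] [SuccOrder α] [IsSuccArchimedean α]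
    {P : α → Prop} {a b : α} (hba : b ≤ a) (hb : P b) (ha : ¬P a) :
    ∃ k, b ≤ k ∧ k < a ∧ P k ∧ ¬P (succ k) := by
  induction hba using Succ.rec with
  | rfl => exact absurd hb ha
  | succ c hbc ih =>
    by_cases hc : P c
    · have hne : c ≠ succ c := fun h => ha (h ▸ hc)
      exact ⟨c, hbc, (le_succ c).lt_of_ne hne, hc, ha⟩
    · obtain ⟨k, hbk, hkc, hk⟩ := ih hc
      exact ⟨k, hbk, hkc.trans_le (le_succ c), hk⟩

/-- A map has no double descents if it never decreases at two consecutive steps. Since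
`succ i = i` at a maximal `i`, there is no descent at the last position. -/
def NoDoubleDescent {α β : Type*} [LT α] [Preorder β] [SuccOrder β] (f : β → α) : Prop :=
  ∀ i, f (succ i) < f i → ¬f (succ (succ i)) < f (succ i)

variable {α β : Type*} [PartialOrder α] [SuccOrder α] [IsSuccArchimedean α] [LinearOrder β]
  [SuccOrder β]

theorem exists_succ_symm_succ_lt_symm_of_not_apply_succ_lt (σ : β ≃ α) {a b : α} {i : β}
    (hba : b ≤ a) (hai : σ.symm a ≤ i) (hib : i < σ.symm b) (hi : ¬σ (succ i) < σ i) :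
    ∃ k, b ≤ k ∧ k < a ∧ succ (σ.symm (succ k)) < σ.symm k := by
  obtain ⟨k, hbk, hka, hik, hki⟩ :=
    exists_and_not_succ_of_le (P := fun v => i < σ.symm v) hba hib hai.not_gt
  rw [not_lt] at hki
  have hle : succ (σ.symm (succ k)) ≤ σ.symm k := succ_le_of_lt (hki.trans_lt hik)
  refine ⟨k, hbk, hka, hle.lt_of_ne fun heq => ?_⟩
  have hk : σ.symm k = succ i :=
    le_antisymm (heq ▸ succ_le_succ hki) (succ_le_of_lt hik)
  have hk' : σ.symm (succ k) = i :=
    (succ_eq_succ_iff_of_not_isMax (hki.trans_lt hik).not_isMax hik.not_isMax).1 (heq.trans hk)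
  rw [← hk, ← hk', σ.apply_symm_apply, σ.apply_symm_apply] at hi
  exact hi (lt_succ_of_not_isMax hka.not_isMax)

theorem cswap_exists_of_relevant_inversion_general (σ : β ≃ α) (hσ : NoDoubleDescent σ) {a b : α}
    (hba : b ≤ a) (hrel : succ (σ.symm a) < σ.symm b) :
    ∃ k, b ≤ k ∧ k < a ∧ succ (σ.symm (succ k)) < σ.symm k := by
  by_cases h : σ (succ (σ.symm a)) < σ (σ.symm a)
  · exact exists_succ_symm_succ_lt_symm_of_not_apply_succ_lt σ hba (le_succ _) hrel (hσ _ h)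
  · exact exists_succ_symm_succ_lt_symm_of_not_apply_succ_lt σ hba le_rfl
      ((le_succ _).trans_lt hrel) h

end SuccOrder

section Fin

open Order

theorem not_isMax_iff_val_add_one_lt {m : ℕ} {i : Fin m} : ¬IsMax i ↔ (i : ℕ) + 1 < m := by
  rw [not_isMax_iff]
  exact ⟨fun ⟨j, hij⟩ => (Nat.succ_le_of_lt hij).trans_lt j.isLt,
    fun hi => ⟨⟨i + 1, hi⟩, Nat.lt_succ_self i⟩⟩

theorem val_succ_of_not_isMax {m : ℕ} {i : Fin m} (hi : ¬IsMax i) :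
    ((succ i : Fin m) : ℕ) = i + 1 :=
  (covBy_iff_add_one_eq.1 (Fin.covBy_iff.1 (covBy_succ_of_not_isMax hi))).symm

theorem succ_lt_iff_val_add_one_lt {m : ℕ} {i j : Fin m} : succ i < j ↔ (i : ℕ) + 1 < j := by
  by_cases hi : IsMax i
  · have hji : j ≤ i := hi.isTop j
    exact iff_of_false (fun h => (hji.trans (le_succ i)).not_gt h) (by omega)
  · rw [Fin.lt_def, val_succ_of_not_isMax hi]

theorem cyclicSucc_eq_succ {m : ℕ} {i : Fin m} (hi : ¬IsMax i) : cyclicSucc i = succ i := by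
  apply Fin.ext
  rw [val_succ_of_not_isMax hi]
  exact Nat.mod_eq_of_lt (not_isMax_iff_val_add_one_lt.1 hi)

theorem mem_cSwapSet_iff {n : ℕ} {σ : Equiv.Perm (Fin (2 * n))} {k : Fin (2 * n)} :
    k ∈ CSwapSet σ ↔ succ (σ⁻¹ (succ k)) < σ⁻¹ k := by
  rw [succ_lt_iff_val_add_one_lt, CSwapSet, Set.mem_ofPred_eq, ← not_isMax_iff_val_add_one_lt]
  by_cases hk : IsMax k
  · rw [succ_eq_iff_isMax.2 hk]
    exact iff_of_false (fun h => h.1 hk) (by omega)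
  · rw [cyclicSucc_eq_succ hk]
    exact and_iff_right hk

theorem IsCAP.apply_lt_apply_succ {n : ℕ} {σ : Equiv.Perm (Fin (2 * n))} (hσ : IsCAP σ)
    {i : Fin (2 * n)} (hi : Even (i : ℕ)) : σ i < σ (succ i) := by
  have hmax : ¬IsMax i := by
    rw [not_isMax_iff_val_add_one_lt]
    obtain ⟨j, hj⟩ := hi
    omega
  exact cyclicSucc_eq_succ hmax ▸ (hσ i).1 hi

theorem IsCAP.noDoubleDescent {n : ℕ} {σ : Equiv.Perm (Fin (2 * n))} (hσ : IsCAP σ) :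
    NoDoubleDescent σ := by
  intro i hdesc
  have hmax : ¬IsMax i := fun h => hdesc.ne (by rw [succ_eq_iff_isMax.2 h])
  have hodd : ¬Even (i : ℕ) := fun h => hdesc.not_gt (hσ.apply_lt_apply_succ h)
  have hsucc : Even ((succ i : Fin (2 * n)) : ℕ) := by
    rwa [val_succ_of_not_isMax hmax, Nat.even_add_one]
  exact (hσ.apply_lt_apply_succ hsucc).not_gt

end Fin

/-- Lemma 5.5: if `(σ⁻¹(a), σ⁻¹(b))` is a relevant inversion of the cyclically
alternating permutation `σ` (i.e. `b < a` and `σ⁻¹(b) > σ⁻¹(a) + 1`), then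
there is `k` with `b ≤ k < a` and `k ∈ CSwap(σ)`. -/
theorem cswap_exists_of_relevant_inversion (n : ℕ) (hn : 1 ≤ n)
    (σ : Equiv.Perm (Fin (2 * n))) (hσ : IsCAP σ)
    (a b : Fin (2 * n)) (hba : b < a)
    (hrel : ((σ⁻¹ a : Fin (2 * n)) : ℕ) + 1 < ((σ⁻¹ b : Fin (2 * n)) : ℕ)) :
    ∃ k : Fin (2 * n), b ≤ k ∧ k < a ∧ k ∈ CSwapSet σ := by
  simpa only [mem_cSwapSet_iff, Equiv.Perm.inv_def] using
    cswap_exists_of_relevant_inversion_general σ hσ.noDoubleDescent hba.le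
      (succ_lt_iff_val_add_one_lt.2 hrel)
end
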